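/- arXiv:1409.3473 — 7 statements merged into one kernel-verified Lean document; each statement's English description precedes it below -/
import Mathlib

section
/- Let (R, 𝔪) be a Noetherian local ring of Krull dimension d containing a field of characteristic p > 0. Then the following conditions are equivalent: (1) R is a regular local ring; (2) the Frobenius homomorphism F : R → R, x ↦ x^p, is flat; (3) ℓ_R(R/𝔪^{[p]}) = p^d; (4) for every power q = p^e of p, ℓ_R(R/𝔪^{[q]}) = q^d. -/
open IsLocalRing Filter Topology
open scoped TensorProduct

/-- The Frobenius bracket power `I^{[q]}`: the ideal generated by `q`-th powers of elements of `I`. -/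
def Ideal.bracketPow {R : Type*} [CommRing R] (I : Ideal R) (q : ℕ) : Ideal R :=
  Ideal.span ((fun a => a ^ q) '' (I : Set R))

/-- `R°`: the set of elements of `R` not contained in any minimal prime ideal. -/
def ringCirc (R : Type*) [CommRing R] : Set R :=
  {c | ∀ P ∈ minimalPrimes R, c ∉ P}

/-- The tight closure of an ideal `I` in a ring of characteristic `p`:
`x ∈ I^*` iff there is `c ∈ R°` with `c * x ^ (p ^ e) ∈ I^{[p^e]}` for all sufficiently
large `e`. -/
def tightClosure {R : Type*} [CommRing R] (p : ℕ) (I : Ideal R) : Set R :=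
  {x | ∃ c ∈ ringCirc R, ∃ N : ℕ, ∀ e : ℕ, N ≤ e → c * x ^ p ^ e ∈ I.bracketPow (p ^ e)}

/-- `x` is integral over the ideal `J`: there are `n ≥ 1` and `aᵢ ∈ Jⁱ` with
`x ^ n + a₁ x ^ (n-1) + ⋯ + aₙ = 0`. -/
def IsIntegralOverIdeal {R : Type*} [CommRing R] (J : Ideal R) (x : R) : Prop :=
  ∃ n : ℕ, 0 < n ∧ ∃ a : ℕ → R, (∀ i ∈ Finset.Icc 1 n, a i ∈ J ^ i) ∧
    x ^ n + ∑ i ∈ Finset.Icc 1 n, a i * x ^ (n - i) = 0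

/-- `R` is F-finite: `F_*R` is a finitely generated `R`-module, i.e. there is a finite set
of generators `s` such that every element of `R` is an `R`-linear combination of elements of
`s` with respect to the Frobenius-twisted action `r • b = r ^ p * b`. -/
def FFinite (R : Type*) [CommRing R] (p : ℕ) : Prop :=
  ∃ s : Finset R, ∀ x : R, ∃ a : R → R, x = ∑ b ∈ s, a b ^ p * b

/-- The map `cF^e : R → F^e_* R`, `x ↦ c * x ^ (p ^ e)`, splits as an `R`-module
homomorphism: there is an additive `φ : R → R` with `φ (r ^ (p ^ e) * x) = r * φ x`
for all `r, x` and `φ c = 1`. -/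
def FrobSplitsWith {R : Type*} [CommRing R] (p : ℕ) (c : R) (e : ℕ) : Prop :=
  ∃ φ : R →+ R, (∀ r x : R, φ (r ^ p ^ e * x) = r * φ x) ∧ φ c = 1

/-- `R` is strongly F-regular: F-finite, reduced, and for every `c ∈ R°` some `cF^e` splits. -/
def StronglyFRegular (R : Type*) [CommRing R] (p : ℕ) : Prop :=
  FFinite R p ∧ IsReduced R ∧ ∀ c ∈ ringCirc R, ∃ e : ℕ, FrobSplitsWith p c e

/-- `R` is F-pure: the Frobenius map `R → F_* R` splits as an `R`-module homomorphism. -/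
def FPure (R : Type*) [CommRing R] (p : ℕ) : Prop :=
  ∃ φ : R →+ R, (∀ r x : R, φ (r ^ p * x) = r * φ x) ∧ φ 1 = 1

/-- A regular local ring: a Noetherian local ring whose maximal ideal can be generated by
`dim R` elements. -/
def IsRegularLocal (R : Type*) [CommRing R] [IsLocalRing R] : Prop :=
  IsNoetherianRing R ∧ ∃ (d : ℕ) (x : Fin d → R),
    ringKrullDim R = d ∧ IsLocalRing.maximalIdeal R = Ideal.span (Set.range x)

/-- The height of an ideal: the infimum of the heights of the primes containing it. -/
noncomputable def idealHeight {R : Type*} [CommRing R] (I : Ideal R) : ℕ∞ :=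
  ⨅ (P : PrimeSpectrum R) (_ : I ≤ P.asIdeal), Order.height P

/-- A parameter ideal: an ideal generated by `ht I` elements. -/
def IsParameterIdeal {R : Type*} [CommRing R] (I : Ideal R) : Prop :=
  ∃ n : ℕ, idealHeight I = n ∧ ∃ x : Fin n → R, I = Ideal.span (Set.range x)

/-- A local ring is F-rational if every parameter ideal is tightly closed. -/
def FRationalLocal (R : Type*) [CommRing R] [IsLocalRing R] (p : ℕ) : Prop :=
  ∀ I : Ideal R, IsParameterIdeal I → tightClosure p I = ↑I

/-- A Cohen–Macaulay local ring: every full system of parameters `x₁, …, x_d`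
(`d = dim B`) is a regular sequence, i.e. `(x₁, …, xᵢ) : xᵢ₊₁ = (x₁, …, xᵢ)`. -/
def IsCohenMacaulayLocalRing (B : Type*) [CommRing B] [IsLocalRing B] : Prop :=
  ∀ d : ℕ, ringKrullDim B = d →
    ∀ x : Fin d → B, (∀ i, x i ∈ IsLocalRing.maximalIdeal B) →
      (Ideal.span (Set.range x)).radical = IsLocalRing.maximalIdeal B →
      ∀ i : Fin d,
        Submodule.colon (Ideal.span (x '' {j | (j : ℕ) < (i : ℕ)})) (Ideal.span {x i}) =
          Ideal.span (x '' {j | (j : ℕ) < (i : ℕ)})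

/-- The length `ℓ_R M` of a module, as an extended natural number: the supremum of the
lengths of chains of submodules below `⊤`. -/
noncomputable def moduleLength (R M : Type*) [Ring R] [AddCommGroup M] [Module R M] : ℕ∞ :=
  Order.height (⊤ : Submodule R M)

/-- The Frobenius endomorphism `x ↦ x ^ p`, as a ring homomorphism, in prime
characteristic `p`. -/
noncomputable def frobeniusRingHom (R : Type*) [CommRing R] (p : ℕ) [Fact p.Prime] [CharP R p] :
    R →+* R :=
  frobenius R p


namespace KunzAux

noncomputable abbrev len {R : Type*} [CommRing R] (I : Ideal R) : ℕ∞ := Module.length R (R ⧸ I)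

/-- The colon ideal `I : x`. -/
def kcolon {R : Type*} [CommRing R] (I : Ideal R) (x : R) : Ideal R :=
  Submodule.comap (LinearMap.mulLeft R x) I

section basic
variable {R : Type*} [CommRing R]

lemma mem_kcolon {I : Ideal R} {x a : R} : a ∈ kcolon I x ↔ x * a ∈ I := Iff.rfl

lemma kcolon_le (I : Ideal R) (x : R) :
    kcolon I x ≤ Submodule.comap (LinearMap.mulLeft R x) I := fun _ h => h

lemma len_anti {I J : Ideal R} (h : I ≤ J) : len J ≤ len I :=
  Module.length_le_of_surjective (Submodule.factor h) (Submodule.factor_surjective h)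

lemma len_split (I : Ideal R) (x : R) :
    len I = len (kcolon I x) + len (I ⊔ Ideal.span {x}) := by
  refine Module.length_eq_add_of_exact
    (Submodule.mapQ (kcolon I x) I (LinearMap.mulLeft R x) (kcolon_le I x))
    (Submodule.factor (le_sup_left : I ≤ I ⊔ Ideal.span {x})) ?_ (Submodule.factor_surjective _) ?_
  · rw [← LinearMap.ker_eq_bot, Submodule.ker_mapQ, eq_bot_iff, Submodule.map_le_iff_le_comap]
    intro z hz
    exact (Submodule.Quotient.mk_eq_zero _).2 hz
  · intro y
    obtain ⟨y, rfl⟩ := Submodule.Quotient.mk_surjective _ y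
    constructor
    · intro h
      have h : y ∈ I ⊔ Ideal.span {x} := by
        exact (Submodule.Quotient.mk_eq_zero _).1 h
      obtain ⟨i, hi, z, hz, rfl⟩ := Submodule.mem_sup.1 h
      obtain ⟨b, rfl⟩ := Ideal.mem_span_singleton'.1 hz
      refine ⟨Submodule.Quotient.mk b, ?_⟩
      rw [Submodule.mapQ_apply, Submodule.Quotient.eq]
      have : (LinearMap.mulLeft R x) b - (i + b * x) = -i := by
        simp only [LinearMap.mulLeft_apply]; ring
      rw [this]; exact I.neg_mem hi
    · rintro ⟨b, hb⟩
      obtain ⟨b, rfl⟩ := Submodule.Quotient.mk_surjective _ b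
      rw [← hb, Submodule.mapQ_apply]
      have : x * b ∈ I ⊔ Ideal.span {x} :=
        Ideal.mul_mem_right _ _ (le_sup_right (a := I) (Ideal.mem_span_singleton_self x))
      exact (Submodule.Quotient.mk_eq_zero _).2 this

lemma len_sup_mul_le (J : Ideal R) (a b : R) :
    len (J ⊔ Ideal.span {a * b}) ≤ len (J ⊔ Ideal.span {a}) + len (J ⊔ Ideal.span {b}) := by
  rw [len_split (J ⊔ Ideal.span {a * b}) a, add_comm]
  gcongr
  · apply len_anti
    refine sup_le (le_sup_left.trans le_sup_left) le_sup_right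
  · apply len_anti
    refine sup_le (fun z hz => ?_) ?_
    · exact Ideal.mul_mem_left _ _ (Ideal.mem_sup_left hz)
    · rw [Ideal.span_singleton_le_iff_mem]
      exact Ideal.mem_sup_right (Ideal.mem_span_singleton_self _)

lemma len_top : len (⊤ : Ideal R) = 0 := by
  rw [Module.length_eq_zero_iff]; exact Submodule.Quotient.subsingleton_iff.2 rfl

lemma len_sup_pow_le (J : Ideal R) (a : R) (n : ℕ) :
    len (J ⊔ Ideal.span {a ^ n}) ≤ n * len (J ⊔ Ideal.span {a}) := by
  induction n with
  | zero => simp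
  | succ n ih =>
    rw [pow_succ]
    refine (len_sup_mul_le _ _ _).trans ?_
    push_cast
    rw [add_mul, one_mul]
    gcongr

lemma len_sup_range_pow_le {ι : Type*} (s : Finset ι) (x : ι → R) (n : ℕ) (J : Ideal R) :
    len (J ⊔ Ideal.span ((fun i => x i ^ n) '' s)) ≤ n ^ s.card * len (J ⊔ Ideal.span (x '' s)) := by
  classical
  induction s using Finset.induction_on generalizing J with
  | empty => simp
  | insert a s ha ih =>
    rw [Finset.coe_insert, Set.image_insert_eq, Set.image_insert_eq, Ideal.span_insert,
      Ideal.span_insert, ← sup_assoc, ← sup_assoc, Finset.card_insert_of_notMem ha]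
    refine (ih _).trans ?_
    rw [pow_succ, mul_assoc]
    gcongr
    rw [sup_right_comm J (Ideal.span {x a ^ n}), sup_right_comm J (Ideal.span {x a})]
    exact len_sup_pow_le (J ⊔ Ideal.span (x '' s)) (x a) n

end basic

section loc
variable {R : Type*} [CommRing R] [IsLocalRing R]

lemma len_maximal : len (maximalIdeal R) = 1 := by
  rw [Module.length_eq_one_iff]
  exact isSimpleModule_iff_isCoatom.2 (Ideal.isMaximal_def.1 inferInstance)

/-- Induction by adding socle elements. -/
lemma socle_induction [IsNoetherianRing R] (I : Ideal R) (P : Ideal R → Prop) (base : P I)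
    (step : ∀ (J : Ideal R) (x : R), x ∈ I → x ∉ J → kcolon J x = maximalIdeal R →
      P (J ⊔ Ideal.span {x}) → P J) (J : Ideal R) (hJI : J ≤ I) (k : ℕ)
    (hk : maximalIdeal R ^ k ≤ J) : P J := by
  induction J using WellFoundedGT.induction with
  | _ J ih =>
    by_cases h : I ≤ J
    · rwa [le_antisymm hJI h]
    have hex : ∃ j, maximalIdeal R ^ j * I ≤ J := ⟨k, Ideal.mul_le_left.trans hk⟩
    classical
    have h0 : Nat.find hex ≠ 0 := by
      intro h0
      have := Nat.find_spec hex
      rw [h0] at this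
      simp at this
      exact h this
    obtain ⟨j, hj⟩ := Nat.exists_eq_succ_of_ne_zero h0
    have h1 : ¬ maximalIdeal R ^ j * I ≤ J := Nat.find_min hex (by omega)
    have h2 : maximalIdeal R ^ (j+1) * I ≤ J := by
      have := Nat.find_spec hex
      rwa [hj] at this
    obtain ⟨x, hx, hxJ⟩ := Set.not_subset.1 h1
    have hxI : x ∈ I := (Ideal.mul_le_right : maximalIdeal R ^ j * I ≤ I) hx
    have hc : kcolon J x = maximalIdeal R := by
      symm
      apply (maximalIdeal.isMaximal R).eq_of_le
      · intro ht
        apply hxJ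
        have : (1 : R) ∈ kcolon J x := by rw [ht]; trivial
        simpa [mem_kcolon] using this
      · intro a ha
        rw [mem_kcolon]
        apply h2
        rw [pow_succ', mul_assoc, mul_comm x]
        exact Ideal.mul_mem_mul ha hx
    refine step J x hxI hxJ hc (ih _ ?_ ?_ ?_)
    · refine lt_of_le_of_ne le_sup_left fun he => hxJ ?_
      rw [he]; exact Ideal.mem_sup_right (Ideal.mem_span_singleton_self _)
    · exact sup_le hJI ((Ideal.span_singleton_le_iff_mem _).2 hxI)
    · exact hk.trans le_sup_left

lemma len_ne_top [IsNoetherianRing R] {J : Ideal R} {k : ℕ} (hk : maximalIdeal R ^ k ≤ J) :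
    len J ≠ ⊤ := by
  refine socle_induction ⊤ (fun J => len J ≠ ⊤) (by simp) ?_ J le_top k hk
  intro J x _ _ hc h
  rw [len_split J x, hc, len_maximal]
  simpa using h

lemma submult [IsNoetherianRing R] {S : Type*} [CommRing S] (φ : R →+* S) (I J : Ideal R)
    (hJI : J ≤ I) (k : ℕ) (hk : maximalIdeal R ^ k ≤ J) :
    len (J.map φ) + len ((maximalIdeal R).map φ) * len I ≤
      len (I.map φ) + len ((maximalIdeal R).map φ) * len J := by
  refine socle_induction I (fun J => len (J.map φ) + len ((maximalIdeal R).map φ) * len I ≤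
      len (I.map φ) + len ((maximalIdeal R).map φ) * len J) le_rfl ?_ J hJI k hk
  intro J x _ _ hc h
  rw [len_split J x, hc, len_maximal, len_split (J.map φ) (φ x)]
  rw [Ideal.map_sup, Ideal.map_span, Set.image_singleton] at h
  have h2 : len (kcolon (J.map φ) (φ x)) ≤ len ((maximalIdeal R).map φ) := by
    apply len_anti
    rw [Ideal.map_le_iff_le_comap, ← hc]
    intro a ha
    rw [Ideal.mem_comap, mem_kcolon, ← map_mul]
    exact Ideal.mem_map_of_mem _ ha
  calc _ = len (kcolon (J.map φ) (φ x)) + (len (Ideal.map φ J ⊔ Ideal.span {φ x}) +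
      len (Ideal.map φ (maximalIdeal R)) * len I) := by rw [add_assoc]
    _ ≤ len ((maximalIdeal R).map φ) + (len (I.map φ) + len ((maximalIdeal R).map φ) *
      len (J ⊔ Ideal.span {x})) := by gcongr
    _ = _ := by ring

/-- Artin–Rees for colons. -/
lemma artin_rees [IsNoetherianRing R] (I : Ideal R) (x : R) :
    ∃ c : ℕ, ∀ n : ℕ, kcolon (I ⊔ maximalIdeal R ^ (n + c)) x ≤ kcolon I x ⊔ maximalIdeal R ^ n := by
  obtain ⟨c, hc⟩ := Ideal.exists_pow_inf_eq_pow_smul (maximalIdeal R) (I ⊔ Ideal.span {x})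
  refine ⟨c, fun n a ha => ?_⟩
  rw [mem_kcolon] at ha
  obtain ⟨i, hi, u, hu, h⟩ := Submodule.mem_sup.1 ha
  have hu2 : u ∈ maximalIdeal R ^ (n + c) • ⊤ ⊓ (I ⊔ Ideal.span {x}) := by
    refine ⟨by simpa using hu, ?_⟩
    have : u = x * a - i := by rw [← h]; ring
    rw [this]
    exact Ideal.sub_mem _ (Ideal.mul_mem_right _ _ (Ideal.mem_sup_right
      (Ideal.mem_span_singleton_self _))) (Ideal.mem_sup_left hi)
  rw [hc _ (by omega), Nat.add_sub_cancel] at hu2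
  have hu3 : u ∈ maximalIdeal R ^ n * (I ⊔ Ideal.span {x}) :=
    (Ideal.mul_mono_right inf_le_right) hu2
  rw [Ideal.mul_sup] at hu3
  obtain ⟨i', hi', v, hv, h'⟩ := Submodule.mem_sup.1 hu3
  obtain ⟨b, hb, rfl⟩ := Ideal.mem_mul_span_singleton.1 hv
  refine Submodule.mem_sup.2 ⟨a - b, ?_, b, hb, by ring⟩
  rw [mem_kcolon]
  have : x * (a - b) = i + i' := by rw [mul_sub, ← h, ← h']; ring
  rw [this]
  exact I.add_mem hi ((Ideal.mul_le_right : maximalIdeal R ^ n * I ≤ I) hi')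

lemma kcolon_prime {P : Ideal R} (hP : P.IsPrime) {x : R} (hx : x ∉ P) : kcolon P x = P := by
  ext a
  rw [mem_kcolon]
  exact ⟨fun h => (hP.mem_or_mem h).resolve_left hx, fun h => P.mul_mem_left _ h⟩

/-- polynomial lower bound -/
lemma lower [IsNoetherianRing R] (d : ℕ) (P : PrimeSpectrum R) (hP : (d : ℕ∞) ≤ Order.coheight P) :
    ∃ C : ℕ, ∀ n : ℕ, 1 ≤ n → ((n ^ d : ℕ) : ℕ∞) ≤ C * len (P.asIdeal ⊔ maximalIdeal R ^ n) := by
  induction d generalizing P with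
  | zero =>
    refine ⟨1, fun n hn => ?_⟩
    have : P.asIdeal ⊔ maximalIdeal R ^ n ≤ maximalIdeal R :=
      sup_le (le_maximalIdeal P.2.ne_top) (Ideal.pow_le_self (by omega))
    simpa [len_maximal] using len_anti this
  | succ d ih =>
    obtain ⟨Q, hPQ, hQ⟩ : ∃ Q > P, (d : ℕ∞) ≤ Order.coheight Q := by
      by_contra! hcon
      have : Order.coheight P ≤ d := by
        rw [Order.coheight_eq_iSup_gt_coheight]
        exact iSup₂_le fun y hy => Order.add_one_le_of_lt (hcon y hy)
      have := hP.trans this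
      norm_cast at this
      omega
    obtain ⟨C, hC⟩ := ih Q hQ
    obtain ⟨x, hxQ, hxP⟩ := Set.not_subset.1 (not_le_of_gt hPQ : ¬ Q.asIdeal ≤ P.asIdeal)
    obtain ⟨c, hc⟩ := artin_rees P.asIdeal x
    simp_rw [kcolon_prime P.2 hxP] at hc
    set f : ℕ → ℕ∞ := fun n => len (P.asIdeal ⊔ maximalIdeal R ^ n) with hf
    set g : ℕ → ℕ∞ := fun n => len (Q.asIdeal ⊔ maximalIdeal R ^ n) with hg
    have hgm : Monotone g := fun a b h => len_anti (sup_le_sup_left (Ideal.pow_le_pow_right h) _)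
    have hfm : Monotone f := fun a b h => len_anti (sup_le_sup_left (Ideal.pow_le_pow_right h) _)
    have rec1 : ∀ n, f n + g (n + c) ≤ f (n + c) := fun n => by
      simp only [hf, hg]
      rw [len_split (P.asIdeal ⊔ maximalIdeal R ^ (n + c)) x]
      gcongr
      · exact len_anti (hc n)
      · apply len_anti
        rw [sup_right_comm]
        exact sup_le_sup_right (sup_le hPQ.le ((Ideal.span_singleton_le_iff_mem _).2 hxQ)) _
    have hgf : ∀ n, g n ≤ f n := fun n => len_anti (sup_le_sup_right hPQ.le _)
    have rec2 : ∀ k n : ℕ, ((k + 1 : ℕ) : ℕ∞) * g n ≤ f (n + k * c) := by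
      intro k n
      induction k with
      | zero => simpa using hgf n
      | succ k ihk =>
        have := rec1 (n + k * c)
        rw [Nat.cast_succ (k + 1), add_mul, one_mul, add_mul k 1 c, one_mul, ← add_assoc]
        refine le_trans ?_ this
        gcongr
        exact hgm (by omega)
    refine ⟨C * 2 ^ (d+1) * (c + 1), fun n hn => ?_⟩
    obtain ⟨k, hk⟩ : ∃ k, k = (n - 1) / (2 * (c + 1)) := ⟨_, rfl⟩
    have hk1 : k * (2 * (c + 1)) ≤ n - 1 := hk ▸ Nat.div_mul_le_self _ _
    have hk2 : n ≤ (k + 1) * (2 * (c + 1)) := by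
      have := Nat.lt_div_mul_add (a := n - 1) (b := 2 * (c + 1)) (by omega)
      rw [← hk] at this
      rw [add_mul, one_mul]
      omega
    obtain ⟨m, hm⟩ : ∃ m, n = m + k * c := ⟨n - k * c, by
      have : k * c ≤ n := by nlinarith [Nat.sub_le n 1]
      omega⟩
    have hm2 : n ≤ 2 * m := by
      have : k * (2 * (c + 1)) = 2 * (k * c) + 2 * k := by ring
      omega
    have hm1 : 1 ≤ m := by omega
    have e1 : n ^ (d + 1) ≤ 2 ^ (d + 1) * (c + 1) * (k + 1) * m ^ d := by
      calc n ^ (d + 1) = n ^ d * n := pow_succ _ _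
        _ ≤ (2 * m) ^ d * ((k + 1) * (2 * (c + 1))) := by gcongr
        _ = _ := by ring
    calc ((n ^ (d + 1) : ℕ) : ℕ∞) ≤ ((2 ^ (d + 1) * (c + 1) * (k + 1) * m ^ d : ℕ) : ℕ∞) := by
          exact_mod_cast e1
      _ = ((2 ^ (d + 1) * (c + 1) : ℕ) : ℕ∞) * ((k + 1 : ℕ) : ℕ∞) * ((m ^ d : ℕ) : ℕ∞) := by
          push_cast; ring
      _ ≤ ((2 ^ (d + 1) * (c + 1) : ℕ) : ℕ∞) * ((k + 1 : ℕ) : ℕ∞) * (C * g m) := by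
          gcongr; exact hC m hm1
      _ = ((C * 2 ^ (d + 1) * (c + 1) : ℕ) : ℕ∞) * (((k + 1 : ℕ) : ℕ∞) * g m) := by
          push_cast; ring
      _ ≤ ((C * 2 ^ (d + 1) * (c + 1) : ℕ) : ℕ∞) * f n := by
          rw [hm]; gcongr; exact rec2 k m
end loc

section lech
variable {R : Type*} [CommRing R] {ι : Type*} [Fintype ι]

def Indep (f : ι → R) : Prop :=
  ∀ a : ι → R, ∑ i, a i * f i = 0 → ∀ i, a i ∈ Ideal.span (Set.range f)

lemma sum_ite_aux [DecidableEq ι] (j : ι) (u : R) (v f : ι → R) :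
    ∑ i, (if i = j then u else v i) * f i = u * f j + ∑ i ∈ Finset.univ.erase j, v i * f i := by
  rw [← Finset.add_sum_erase _ _ (Finset.mem_univ j)]
  congr 1
  · simp
  · refine Finset.sum_congr rfl fun i hi => ?_
    rw [if_neg (Finset.ne_of_mem_erase hi)]

lemma span_update_le [DecidableEq ι] {f : ι → R} {j : ι} {g h : R} (hf : f j = g * h) :
    Ideal.span (Set.range f) ≤ Ideal.span (Set.range (Function.update f j g)) := by
  rw [Ideal.span_le]
  rintro _ ⟨i, rfl⟩
  by_cases hi : i = j
  · subst hi
    rw [hf]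
    refine Ideal.mul_mem_right _ _ (Ideal.subset_span ⟨i, by simp⟩)
  · exact Ideal.subset_span ⟨i, by simp [hi]⟩

lemma mem_span_update [DecidableEq ι] (f : ι → R) (j : ι) (g : R) :
    g ∈ Ideal.span (Set.range (Function.update f j g)) := Ideal.subset_span ⟨j, by simp⟩

lemma Indep.update [DecidableEq ι] {f : ι → R} {j : ι} {g h : R} (hf : f j = g * h)
    (H : Indep f) : Indep (Function.update f j g) := by
  intro a ha
  have e0 : a j * g + ∑ i ∈ Finset.univ.erase j, a i * f i = 0 := by
    rw [← Finset.add_sum_erase _ _ (Finset.mem_univ j)] at ha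
    rw [← ha]
    congr 1
    · simp
    · refine Finset.sum_congr rfl fun i hi => ?_
      rw [Function.update_of_ne (Finset.ne_of_mem_erase hi)]
  have h1 : a j ∈ Ideal.span (Set.range f) := by
    have := H (fun i => if i = j then a j else h * a i) (by
      rw [sum_ite_aux, hf]
      simp_rw [mul_assoc h]
      rw [← Finset.mul_sum]
      linear_combination h * e0) j
    simpa using this
  obtain ⟨b, hb⟩ := (Ideal.mem_span_range_iff_exists_fun).1 h1
  have h2 := H (fun i => if i = j then b j * g else a i + b i * g) (by
    rw [sum_ite_aux]
    have : ∑ i ∈ Finset.univ.erase j, (a i + b i * g) * f i =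
      ∑ i ∈ Finset.univ.erase j, a i * f i + g * ∑ i ∈ Finset.univ.erase j, b i * f i := by
      rw [Finset.mul_sum, ← Finset.sum_add_distrib]
      exact Finset.sum_congr rfl fun i _ => by ring
    rw [this]
    rw [← Finset.add_sum_erase _ _ (Finset.mem_univ j)] at hb
    linear_combination e0 + g * hb)
  intro i
  by_cases hi : i = j
  · subst hi
    exact span_update_le hf h1
  · have h3 := span_update_le hf (h2 i)
    simp only [if_neg hi] at h3
    have := Ideal.sub_mem _ h3 (Ideal.mul_mem_left _ (b i) (mem_span_update f j g))
    simpa using this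

lemma Indep.kcolon_le [DecidableEq ι] {f : ι → R} {j : ι} {g h : R} (hf : f j = g * h)
    (H : Indep f) : kcolon (Ideal.span (Set.range f)) g ≤
      Ideal.span (Set.range (Function.update f j h)) := by
  intro a ha
  rw [mem_kcolon] at ha
  obtain ⟨b, hb⟩ := (Ideal.mem_span_range_iff_exists_fun).1 ha
  have h1 := H (fun i => if i = j then a - b j * h else (-h) * b i) (by
    rw [sum_ite_aux, hf]
    simp_rw [mul_assoc (-h)]
    rw [← Finset.mul_sum]
    rw [← Finset.add_sum_erase _ _ (Finset.mem_univ j), hf] at hb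
    linear_combination (-h) * hb) j
  simp only [if_true] at h1
  have := Ideal.add_mem _ (span_update_le (hf.trans (mul_comm g h)) h1)
    (Ideal.mul_mem_left _ (b j) (mem_span_update f j h))
  simpa using this

lemma lech (x : ι → R) (hx : Ideal.span (Set.range x) ≠ ⊤) (N : ℕ) :
    ∀ a : ι → ℕ, ∑ i, a i = N → (∀ i, 1 ≤ a i) → Indep (fun i => x i ^ a i) →
    ((∏ i, a i : ℕ) : ℕ∞) ≤ len (Ideal.span (Set.range fun i => x i ^ a i)) := by
  classical
  induction N using Nat.strong_induction_on with
  | _ N ih =>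
    intro a hN ha H
    by_cases hall : ∀ i, a i = 1
    · simp only [hall, pow_one, Finset.prod_const_one]
      have : Nontrivial (R ⧸ Ideal.span (Set.range x)) := Ideal.Quotient.nontrivial_iff.2 hx
      have := Module.length_pos (R := R) (M := R ⧸ Ideal.span (Set.range x))
      simpa using Order.one_le_iff_pos.2 this
    push Not at hall
    obtain ⟨j, hj⟩ := hall
    obtain ⟨b, hb⟩ : ∃ b, a j = b + 2 := ⟨a j - 2, by have := ha j; omega⟩
    set f : ι → R := fun i => x i ^ a i with hfdef
    have hf : f j = x j ^ (b + 1) * x j := by simp only [hfdef, hb]; ring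
    have hu : ∀ c : ℕ, Function.update f j (x j ^ c) =
        fun i => x i ^ (Function.update a j c i) := by
      intro c
      ext i
      by_cases hi : i = j
      · subst hi; simp
      · simp [hi, hfdef]
    have key : ∀ c : ℕ, 1 ≤ c → c < b + 2 → (∃ g, f j = x j ^ c * g) →
        ((c * ∏ i ∈ Finset.univ \ {j}, a i : ℕ) : ℕ∞) ≤
          len (Ideal.span (Set.range (Function.update f j (x j ^ c)))) := by
      rintro c hc1 hc2 ⟨g, hg⟩
      have hI := H.update hg
      rw [hu] at hI ⊢
      rw [← Finset.prod_update_of_mem (Finset.mem_univ j) a c]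
      refine ih _ ?_ _ rfl ?_ hI
      · rw [← hN, Finset.sum_update_of_mem (Finset.mem_univ j),
          ← Finset.add_sum_erase _ a (Finset.mem_univ j), hb, Finset.sdiff_singleton_eq_erase]
        omega
      · intro i
        by_cases hi : i = j
        · subst hi; simpa using hc1
        · simpa [hi] using ha i
    have k1 := key 1 le_rfl (by omega) ⟨x j ^ (b+1), by rw [hf]; ring⟩
    have k2 := key (b+1) (by omega) (by omega) ⟨_, hf⟩
    rw [pow_one] at k1
    rw [len_split _ (x j ^ (b + 1))]
    have e : ∏ i, a i = 1 * (∏ i ∈ Finset.univ \ {j}, a i) + (b + 1) * ∏ i ∈ Finset.univ \ {j}, a i := by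
      rw [← Finset.mul_prod_erase _ a (Finset.mem_univ j), hb, Finset.sdiff_singleton_eq_erase]
      ring
    rw [e, Nat.cast_add]
    refine add_le_add (k1.trans (len_anti (H.kcolon_le hf))) (k2.trans (len_anti ?_))
    exact sup_le (span_update_le hf) ((Ideal.span_singleton_le_iff_mem _).2 (mem_span_update _ _ _))

end lech

section flat
variable {R S : Type*} [CommRing R] [CommRing S]

lemma indep_of_flat [IsLocalRing R] {ι : Type*} [Fintype ι] (φ : R →+* S) (hφ : φ.Flat) (x : ι → R)
    (hx : Ideal.span (Set.range x) = maximalIdeal R)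
    (hmin : ∀ b : ι → R, ∑ i, b i * x i = 0 → ∀ i, b i ∈ maximalIdeal R) :
    Indep (fun i => φ (x i)) := by
  intro a ha
  let := φ.toAlgebra
  have : Module.Flat R S := hφ
  have hsm : ∀ (r : R) (s : S), r • s = φ r * s := fun r s => Algebra.smul_def r s
  have h0 : ∑ i, x i • a i = 0 := by
    rw [← ha]
    refine Finset.sum_congr rfl fun i _ => ?_
    rw [hsm, mul_comm]
  have hT : Module.IsTrivialRelation x a := Module.Flat.isTrivialRelation_of_sum_smul_eq_zero h0
  have hm : Ideal.span (Set.range fun i => φ (x i)) = (maximalIdeal R).map φ := by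
    rw [← hx, Ideal.map_span, ← Set.range_comp]
    simp only [Function.comp_def]
  intro i
  obtain ⟨k, b, y, h1, h2⟩ := hT
  have hb : ∀ j, b i j ∈ maximalIdeal R := by
    intro j
    refine hmin (fun i => b i j) ?_ i
    rw [← h2 j]
    exact Finset.sum_congr rfl fun i _ => mul_comm _ _
  have h3 : ∑ j, b i j • y j ∈ (maximalIdeal R).map φ := by
    refine Ideal.sum_mem _ fun j _ => ?_
    rw [hsm]
    exact Ideal.mul_mem_right _ _ (Ideal.mem_map_of_mem φ (hb j))
  rw [hm, h1 i]
  exact h3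

lemma flat_of_colon (φ : R →+* S)
    (H : ∀ (I : Ideal R) (x : R), kcolon (I.map φ) (φ x) ≤ (kcolon I x).map φ) : φ.Flat := by
  classical
  let := φ.toAlgebra
  have hsm : ∀ (r : R) (s : S), r • s = φ r * s := fun r s => Algebra.smul_def r s
  suffices h : Module.Flat R S from h
  refine Module.Flat.of_forall_isTrivialRelation ?_
  intro l f x h
  let K : Finset (Fin l) → Set (Fin l → S) := fun s =>
    {z | ∃ b : Fin l → R, (∀ i, i ∉ s → b i = 0) ∧ ∑ i, f i * b i = 0 ∧ z = fun i => φ (b i)}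
  have hKrel : ∀ s, ∀ z ∈ Submodule.span S (K s), ∑ i, φ (f i) * z i = 0 := by
    intro s z hz
    induction hz using Submodule.span_induction with
    | mem z hz =>
      obtain ⟨b, _, hb, rfl⟩ := hz
      simp_rw [← map_mul]
      rw [← map_sum, hb, map_zero]
    | zero => simp
    | add y z _ _ hy hz => simp [mul_add, Finset.sum_add_distrib, hy, hz]
    | smul c z _ hz =>
      simp only [Pi.smul_apply, smul_eq_mul]
      simp_rw [mul_left_comm _ c]
      rw [← Finset.mul_sum, hz, mul_zero]
  have hKsupp : ∀ s, ∀ z ∈ Submodule.span S (K s), ∀ i, i ∉ s → z i = 0 := by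
    intro s z hz
    induction hz using Submodule.span_induction with
    | mem z hz =>
      obtain ⟨b, hb, _, rfl⟩ := hz
      intro i hi
      simp [hb i hi]
    | zero => simp
    | add y z _ _ hy hz => intro i hi; simp [hy i hi, hz i hi]
    | smul c z _ hz => intro i hi; simp [hz i hi]
  have hKmono : ∀ s, K s ⊆ K Finset.univ := by
    rintro s z ⟨b, hb, hb', rfl⟩
    exact ⟨b, by simp, hb', rfl⟩
  have main : ∀ s : Finset (Fin l), ∀ x : Fin l → S, (∀ i, i ∉ s → x i = 0) →
      ∑ i, φ (f i) * x i = 0 → x ∈ Submodule.span S (K Finset.univ) := by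
    intro s
    induction s using Finset.induction_on with
    | empty =>
      intro x hx _
      have : x = 0 := funext fun i => hx i (by simp)
      rw [this]; exact Submodule.zero_mem _
    | insert j s hj ih =>
      intro x hx hrel
      set I : Ideal R := Ideal.span (f '' s) with hI
      have h1 : x j ∈ kcolon (I.map φ) (φ (f j)) := by
        rw [mem_kcolon]
        rw [← Finset.add_sum_erase _ _ (Finset.mem_univ j)] at hrel
        rw [eq_neg_of_add_eq_zero_left hrel]
        refine neg_mem (Ideal.sum_mem _ fun i hi => ?_)
        by_cases his : i ∈ s
        · exact Ideal.mul_mem_right _ _ (Ideal.mem_map_of_mem _ (Ideal.subset_span ⟨i, his, rfl⟩))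
        · rw [hx i (by simp [his, Finset.ne_of_mem_erase hi]), mul_zero]
          exact Ideal.zero_mem _
      have h2 : (kcolon I (f j)).map φ ≤
          (Submodule.span S (K (insert j s))).map (LinearMap.proj (R := S) j) := by
        rw [Ideal.map, Ideal.span_le]
        rintro _ ⟨c, hc, rfl⟩
        have hc : f j * c ∈ I := hc
        obtain ⟨b, hb⟩ := (Submodule.mem_span_image_finset_iff_exists_fun' R).1 hc
        refine ⟨fun i => φ (if i = j then c else if i ∈ s then - b i else 0),
          Submodule.subset_span ⟨_, ?_, ?_, rfl⟩, by simp⟩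
        · intro i hi
          simp only [Finset.mem_insert, not_or] at hi
          simp [hi.1, hi.2]
        · simp_rw [mul_comm (f _)]
          rw [sum_ite_aux, mul_comm c, ← hb]
          have : ∑ i ∈ Finset.univ.erase j, (if i ∈ s then - b i else 0) * f i =
              ∑ i ∈ s, (- b i) * f i := by
            symm
            apply Finset.sum_subset_zero_on_sdiff
            · intro i hi
              simp only [Finset.mem_erase, Finset.mem_univ, and_true]
              rintro rfl; exact hj hi
            · intro i hi
              simp [(Finset.mem_sdiff.1 hi).2]
            · intro i hi; simp [hi]
          rw [this, ← Finset.sum_add_distrib]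
          refine Finset.sum_eq_zero fun i _ => ?_
          simp
      obtain ⟨z, hz, hzj⟩ := h2 (H _ _ h1)
      have hzj : z j = x j := hzj
      have h3 : x - z ∈ Submodule.span S (K Finset.univ) := by
        apply ih
        · intro i hi
          by_cases hij : i = j
          · subst hij; simp [hzj]
          · have : i ∉ insert j s := by simp [hij, hi]
            simp [hx i this, hKsupp _ z hz i this]
        · simp only [Pi.sub_apply, mul_sub, Finset.sum_sub_distrib, hrel, hKrel _ z hz, sub_zero]
      have := Submodule.add_mem _ h3 (Submodule.span_mono (hKmono _) hz)
      simpa using this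
  have hx := main Finset.univ x (by simp) (by simpa [hsm] using h)
  obtain ⟨k, g, v, hv⟩ := Submodule.mem_span_set'.1 hx
  choose b hb1 hb2 hb3 using fun t => (v t).2
  refine ⟨k, fun i t => b t i, g, fun i => ?_, fun t => hb2 t⟩
  rw [← hv]
  simp only [Finset.sum_apply, Pi.smul_apply, smul_eq_mul, hsm]
  refine Finset.sum_congr rfl fun t _ => ?_
  rw [hb3 t, mul_comm]

lemma natCast_mul_ne_top (c : ℕ) {a : ℕ∞} (h : a ≠ ⊤) : (c : ℕ∞) * a ≠ ⊤ := by
  lift a to ℕ using h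
  exact_mod_cast ENat.natCast_ne_top _

lemma eq_of_len_eq {A B : Ideal R} (h : A ≤ B) (hl : len A ≤ len B) (hf : len A ≠ ⊤) : B ≤ A := by
  intro b hb
  have h1 := len_split A b
  have h2 : len A ≤ len (A ⊔ Ideal.span {b}) :=
    hl.trans (len_anti (sup_le h ((Ideal.span_singleton_le_iff_mem _).2 hb)))
  have h3 : len (kcolon A b) = 0 := by
    by_contra h0
    have : len A + 1 ≤ len A := by
      conv_rhs => rw [h1, add_comm]
      exact add_le_add h2 (Order.one_le_iff_pos.2 (pos_iff_ne_zero.2 h0))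
    exact absurd this (not_le_of_gt ((ENat.lt_add_one_iff hf).2 le_rfl))
  rw [Module.length_eq_zero_iff] at h3
  have h4 : kcolon A b = ⊤ := Submodule.Quotient.subsingleton_iff.1 h3
  have : (1 : R) ∈ kcolon A b := by rw [h4]; trivial
  simpa [mem_kcolon] using this

lemma krull [IsLocalRing S] [IsNoetherianRing S] (J : Ideal S) (a : S)
    (h : ∀ n, a ∈ J ⊔ maximalIdeal S ^ n) : a ∈ J := by
  have := Ideal.iInf_pow_smul_eq_bot_of_isLocalRing (M := S ⧸ J) (maximalIdeal S)
    (maximalIdeal.isMaximal S).ne_top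
  rw [← Ideal.Quotient.eq_zero_iff_mem]
  have h2 : (Submodule.Quotient.mk a : S ⧸ J) ∈
      (⨅ i : ℕ, maximalIdeal S ^ i • ⊤ : Submodule S (S ⧸ J)) := by
    rw [Submodule.mem_iInf]
    intro n
    obtain ⟨i, hi, u, hu, rfl⟩ := Submodule.mem_sup.1 (h n)
    have : (Submodule.Quotient.mk (i + u) : S ⧸ J) = u • Submodule.Quotient.mk 1 := by
      rw [← Submodule.Quotient.mk_smul, Submodule.Quotient.eq]
      simpa using hi
    rw [this]
    exact Submodule.smul_mem_smul hu trivial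
  rw [this] at h2
  exact h2

lemma flat_of_len [IsLocalRing R] [IsNoetherianRing R] [IsLocalRing S] [IsNoetherianRing S]
    (φ : R →+* S) (hloc : (maximalIdeal R).map φ ≤ maximalIdeal S) (c : ℕ)
    (H : ∀ (I : Ideal R) (k : ℕ), maximalIdeal R ^ k ≤ I → len (I.map φ) = c * len I) : φ.Flat := by
  apply flat_of_colon
  have le1 : ∀ (I : Ideal R) (x : R), (kcolon I x).map φ ≤ kcolon (I.map φ) (φ x) := by
    intro I x
    rw [Ideal.map_le_iff_le_comap]
    intro a ha
    rw [Ideal.mem_comap, mem_kcolon, ← map_mul]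
    exact Ideal.mem_map_of_mem _ ha
  have prim : ∀ (I : Ideal R) (x : R) (k : ℕ), maximalIdeal R ^ k ≤ I →
      kcolon (I.map φ) (φ x) ≤ (kcolon I x).map φ := by
    intro I x k hk
    have hk1 : maximalIdeal R ^ k ≤ kcolon I x := fun a ha => I.mul_mem_left _ (hk ha)
    have hk2 : maximalIdeal R ^ k ≤ I ⊔ Ideal.span {x} := hk.trans le_sup_left
    have f1 : len ((kcolon I x).map φ) ≠ ⊤ := by
      rw [H _ k hk1]; exact natCast_mul_ne_top c (len_ne_top hk1)
    have f2 : len ((I ⊔ Ideal.span {x}).map φ) ≠ ⊤ := by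
      rw [H _ k hk2]; exact natCast_mul_ne_top c (len_ne_top hk2)
    refine eq_of_len_eq (le1 I x) ?_ f1
    have e1 := len_split (I.map φ) (φ x)
    have e2 : len (I.map φ) = len ((kcolon I x).map φ) + len ((I ⊔ Ideal.span {x}).map φ) := by
      rw [H _ k hk, H _ k hk1, H _ k hk2, len_split I x, mul_add]
    rw [e2, Ideal.map_sup, Ideal.map_span, Set.image_singleton] at e1
    rw [Ideal.map_sup, Ideal.map_span, Set.image_singleton] at f2
    exact (ENat.add_left_injective_of_ne_top f2 e1).le
  intro I x a ha
  apply krull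
  intro n
  obtain ⟨c, hc⟩ := artin_rees I x
  have h1 : a ∈ kcolon ((I ⊔ maximalIdeal R ^ (n + c)).map φ) (φ x) :=
    (Ideal.map_mono le_sup_left : I.map φ ≤ _) ha
  have h2 := prim _ x (n + c) le_sup_right h1
  have h3 := Ideal.map_mono (f := φ) (hc n) h2
  rw [Ideal.map_sup, Ideal.map_pow] at h3
  exact sup_le_sup_left (Ideal.pow_right_mono hloc n) _ h3

end flat

lemma nat_aux {B L C : ℕ} (h : ∀ n, B ^ n ≤ C * L ^ n) : B ≤ L := by
  by_contra! hlt
  rcases Nat.eq_zero_or_pos L with rfl | hL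
  · have := h 1
    simp at this
    omega
  have hL' : (0 : ℝ) < L := by exact_mod_cast hL
  have h1 : (1 : ℝ) < (B : ℝ) / L := by
    rw [one_lt_div hL']; exact_mod_cast hlt
  obtain ⟨n, hn⟩ := pow_unbounded_of_one_lt (C : ℝ) h1
  rw [div_pow, lt_div_iff₀ (by positivity)] at hn
  have := h n
  have : (B : ℝ) ^ n ≤ C * (L : ℝ) ^ n := by exact_mod_cast this
  linarith

section gens
variable {R : Type*} [CommRing R] [IsLocalRing R] [IsNoetherianRing R]

lemma exists_min_gens : ∃ (n : ℕ) (x : Fin n → R), Ideal.span (Set.range x) = maximalIdeal R ∧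
    n = (maximalIdeal R).spanFinrank ∧
    ∀ b : Fin n → R, ∑ i, b i * x i = 0 → ∀ i, b i ∈ maximalIdeal R := by
  classical
  obtain ⟨s, hs1, hs2⟩ := (IsNoetherian.noetherian (maximalIdeal R)).exists_span_finset_card_eq_spanFinrank
  have hspan : Ideal.span (Set.range fun i => ((s.equivFin.symm i : s) : R)) = maximalIdeal R := by
    have : (Set.range fun i => ((s.equivFin.symm i : s) : R)) = (s : Set R) := by
      ext y
      constructor
      · rintro ⟨i, rfl⟩; exact (s.equivFin.symm i).2
      · intro hy; exact ⟨s.equivFin ⟨y, hy⟩, by simp⟩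
    rw [this]; exact hs2
  refine ⟨s.card, fun i => (s.equivFin.symm i : s), hspan, hs1, ?_⟩
  intro b hb i
  by_contra hbi
  obtain ⟨u, hu⟩ : IsUnit (b i) := by simpa using hbi
  set x : Fin s.card → R := fun i => (s.equivFin.symm i : s) with hx
  have hinj : Function.Injective x := Subtype.val_injective.comp s.equivFin.symm.injective
  have hxs : ∀ j, x j ∈ s := fun j => (s.equivFin.symm j).2
  have h1 : x i ∈ Ideal.span ((s.erase (x i) : Finset R) : Set R) := by
    rw [← Finset.add_sum_erase _ _ (Finset.mem_univ i)] at hb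
    have h2 : b i * x i ∈ Ideal.span ((s.erase (x i) : Finset R) : Set R) := by
      rw [eq_neg_of_add_eq_zero_left hb]
      refine neg_mem (Ideal.sum_mem _ fun j hj => ?_)
      refine Ideal.mul_mem_left _ _ (Ideal.subset_span ?_)
      rw [Finset.mem_coe, Finset.mem_erase]
      exact ⟨fun h => (Finset.ne_of_mem_erase hj) (hinj h), hxs j⟩
    have h3 := Ideal.mul_mem_left _ ((u⁻¹ : Rˣ) : R) h2
    rwa [← hu, Units.inv_mul_cancel_left] at h3
  have h4 : Ideal.span ((s.erase (x i) : Finset R) : Set R) = maximalIdeal R := by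
    apply le_antisymm
    · rw [← hs2]
      exact Ideal.span_mono (Finset.coe_subset.2 (Finset.erase_subset _ _))
    · rw [← hs2]
      refine Ideal.span_le.2 fun y hy => ?_
      by_cases hyx : y = x i
      · rw [hyx]; exact h1
      · exact Ideal.subset_span (Finset.mem_coe.2 (Finset.mem_erase.2 ⟨hyx, hy⟩))
  have h5 := Submodule.spanFinrank_span_le_ncard_of_finite (R := R)
    (s := ((s.erase (x i) : Finset R) : Set R)) (Finset.finite_toSet _)
  have h6 : (Submodule.span R ((s.erase (x i) : Finset R) : Set R)) = maximalIdeal R := h4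
  rw [h6, Set.ncard_coe_finset, Finset.card_erase_of_mem (hxs i), ← hs1] at h5
  have := Finset.card_pos.2 ⟨_, hxs i⟩
  omega

lemma exists_sop (d : ℕ) (hd : ringKrullDim R = d) :
    ∃ s : Finset R, (s : Set R) ⊆ maximalIdeal R ∧ s.card = d ∧
      len (Ideal.span (s : Set R)) ≠ ⊤ := by
  obtain ⟨s, hs1, hs2⟩ := Ideal.exists_finset_card_eq_height_of_isNoetherianRing (maximalIdeal R)
  have hh : ((maximalIdeal R).height : WithBot ℕ∞) = d := by
    rw [IsLocalRing.maximalIdeal_height_eq_ringKrullDim, hd]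
  have hh' : (maximalIdeal R).height = d := by exact_mod_cast hh
  have hle : Ideal.span (s : Set R) ≤ maximalIdeal R := hs1.1.2
  refine ⟨s, Ideal.span_le.1 hle, ?_, ?_⟩
  · rw [hh'] at hs2; exact_mod_cast hs2
  · have hrad : maximalIdeal R ≤ (Ideal.span (s : Set R)).radical := by
      rw [Ideal.radical_eq_sInf]
      refine le_sInf ?_
      rintro Q ⟨hQ, hQp⟩
      exact hs1.2 ⟨hQp, hQ⟩ (le_maximalIdeal hQp.ne_top)
    obtain ⟨k, hk⟩ := Ideal.exists_pow_le_of_le_radical_of_fg hrad (IsNoetherian.noetherian _)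
    exact len_ne_top hk

end gens

section frob
variable {R : Type*} [CommRing R] (p : ℕ) [Fact p.Prime] [CharP R p]

lemma bracketPow_eq (I : Ideal R) (e : ℕ) :
    I.bracketPow (p ^ e) = I.map (iterateFrobenius R p e) := by
  unfold Ideal.bracketPow Ideal.map
  congr 1

lemma map_map_frob (I : Ideal R) (e e' : ℕ) :
    (I.map (iterateFrobenius R p e)).map (iterateFrobenius R p e') =
      I.map (iterateFrobenius R p (e + e')) := by
  rw [Ideal.map_map]
  congr 1
  ext x
  simp [iterateFrobenius_def, pow_add, pow_mul]

lemma flat_iterate (h : RingHom.Flat (frobenius R p)) (e : ℕ) :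
    RingHom.Flat (iterateFrobenius R p e) := by
  induction e with
  | zero =>
    have : iterateFrobenius R p 0 = RingHom.id R := by ext x; simp [iterateFrobenius_def]
    rw [this]; exact RingHom.Flat.id R
  | succ e ih =>
    have : iterateFrobenius R p (e + 1) = (frobenius R p).comp (iterateFrobenius R p e) := by
      ext x; simp [iterateFrobenius_def, frobenius_def, pow_add, pow_mul]
    rw [this]; exact ih.comp h

variable [IsLocalRing R] [IsNoetherianRing R]

lemma map_le_pow (e : ℕ) :
    (maximalIdeal R).map (iterateFrobenius R p e) ≤ maximalIdeal R ^ (p ^ e) := by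
  rw [Ideal.map_le_iff_le_comap]
  intro x hx
  rw [Ideal.mem_comap, iterateFrobenius_def]
  exact Ideal.pow_mem_pow hx _

lemma exists_pow_le (e : ℕ) :
    ∃ k, maximalIdeal R ^ k ≤ (maximalIdeal R).map (iterateFrobenius R p e) := by
  apply Ideal.exists_pow_le_of_le_radical_of_fg _ (IsNoetherian.noetherian _)
  intro x hx
  refine ⟨p ^ e, ?_⟩
  rw [← iterateFrobenius_def]
  exact Ideal.mem_map_of_mem _ hx

noncomputable def lam (R : Type*) [CommRing R] (p : ℕ) [Fact p.Prime] [CharP R p] [IsLocalRing R]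
    (e : ℕ) : ℕ∞ :=
  len ((maximalIdeal R).map (iterateFrobenius R p e))

lemma lam_add (e e' : ℕ) : lam R p (e + e') ≤ lam R p e' * lam R p e := by
  obtain ⟨k, hk⟩ := exists_pow_le (R := R) p e
  have := submult (iterateFrobenius R p e') ⊤ _ le_top k hk
  rw [map_map_frob, Ideal.map_top, len_top, mul_zero, zero_add, add_zero] at this
  exact this

lemma lam_zero : lam R p 0 = 1 := by
  have : iterateFrobenius R p 0 = RingHom.id R := by ext x; simp [iterateFrobenius_def]
  rw [lam, this, Ideal.map_id, len_maximal]

lemma lam_mul (e n : ℕ) : lam R p (e * n) ≤ lam R p e ^ n := by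
  induction n with
  | zero => simp [lam_zero]
  | succ n ih =>
    rw [mul_add, mul_one, pow_succ']
    refine (lam_add p _ _).trans ?_
    gcongr

lemma lam_lower (d : ℕ) (hd : ringKrullDim R = d) (e : ℕ) :
    (((p ^ e) ^ d : ℕ) : ℕ∞) ≤ lam R p e := by
  obtain ⟨l, hl⟩ := Order.le_krullDim_iff.1 (le_of_eq hd.symm)
  have hc : (d : ℕ∞) ≤ Order.coheight l.head := by
    rw [← hl]; exact Order.length_le_coheight_head
  obtain ⟨C, hC⟩ := lower d l.head hc
  by_cases htop : lam R p e = ⊤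
  · rw [htop]; exact le_top
  obtain ⟨L, hL⟩ := ENat.ne_top_iff_exists.1 htop
  rw [← hL]
  have hp : 0 < p := (Fact.out : p.Prime).pos
  refine Nat.cast_le.2 (nat_aux (C := C) fun n => ?_)
  have h1 := hC (p ^ (e * n)) (Nat.one_le_pow _ _ hp)
  have h2 : len (l.head.asIdeal ⊔ maximalIdeal R ^ (p ^ (e * n))) ≤ (L : ℕ∞) ^ n := by
    rw [hL]
    refine le_trans (len_anti ?_) (lam_mul p e n)
    exact (map_le_pow p _).trans le_sup_right
  have h3 : (((p ^ (e * n)) ^ d : ℕ) : ℕ∞) ≤ ((C * L ^ n : ℕ) : ℕ∞) := by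
    refine h1.trans ?_
    push_cast
    gcongr
  have h4 := Nat.cast_le.1 h3
  calc _ = (p ^ (e * n)) ^ d := by rw [← pow_mul, ← pow_mul, ← pow_mul]; ring_nf
    _ ≤ _ := h4

lemma lam_le_of_finset (s : Finset R) (hs : (s : Set R) ⊆ maximalIdeal R) (e : ℕ) :
    lam R p e ≤ (((p ^ e) ^ s.card : ℕ) : ℕ∞) * len (Ideal.span (s : Set R)) := by
  have := len_sup_range_pow_le s id (p ^ e) (⊥ : Ideal R)
  simp only [bot_sup_eq, id, Set.image_id'] at this
  push_cast at this ⊢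
  refine le_trans (len_anti ?_) this
  rw [Ideal.span_le]
  rintro _ ⟨y, hy, rfl⟩
  have := Ideal.mem_map_of_mem (iterateFrobenius R p e) (hs hy)
  rwa [iterateFrobenius_def] at this

/-- regular implies length -/
lemma one_three (d : ℕ) (hd : ringKrullDim R = d) (h : IsRegularLocal R) :
    lam R p 1 = ((p ^ d : ℕ) : ℕ∞) := by
  classical
  apply le_antisymm
  · obtain ⟨_, d', x, hd', hx⟩ := h
    have hdd : d' = d := by
      rw [hd] at hd'; exact_mod_cast hd'.symm
    subst hdd
    have h1 := lam_le_of_finset p (Finset.univ.image x) (by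
      rw [hx, Finset.coe_image, Finset.coe_univ, Set.image_univ]; exact Ideal.subset_span) 1
    rw [Finset.coe_image, Finset.coe_univ, Set.image_univ, ← hx, len_maximal, mul_one, pow_one] at h1
    refine h1.trans (Nat.cast_le.2 (Nat.pow_le_pow_right (Fact.out : p.Prime).pos ?_))
    simpa using Finset.card_image_le (s := Finset.univ) (f := x)
  · simpa using lam_lower p d hd 1

lemma three_four (d : ℕ) (hd : ringKrullDim R = d) (h : lam R p 1 = ((p ^ d : ℕ) : ℕ∞)) (e : ℕ) :
    lam R p e = (((p ^ e) ^ d : ℕ) : ℕ∞) := by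
  apply le_antisymm _ (lam_lower p d hd e)
  have := lam_mul (R := R) p 1 e
  rw [one_mul, h] at this
  refine this.trans (le_of_eq ?_)
  rw [← Nat.cast_pow, ← pow_mul, ← pow_mul, mul_comm]

lemma four_two (d : ℕ) (h : ∀ e, lam R p e = (((p ^ e) ^ d : ℕ) : ℕ∞)) :
    RingHom.Flat (frobenius R p) := by
  have hf : frobenius R p = iterateFrobenius R p 1 := by
    ext x; simp [iterateFrobenius_def, frobenius_def]
  rw [hf]
  refine flat_of_len _ ((map_le_pow p 1).trans (Ideal.pow_le_self ?_)) (p ^ d) ?_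
  · simpa using (Fact.out : p.Prime).ne_zero
  intro I k hk
  have h1 : len ((maximalIdeal R).map (iterateFrobenius R p 1)) = ((p ^ d : ℕ) : ℕ∞) := by
    have := h 1
    rwa [pow_one] at this
  apply le_antisymm
  · have := submult (iterateFrobenius R p 1) ⊤ I le_top k hk
    rwa [Ideal.map_top, len_top, mul_zero, zero_add, add_zero, h1] at this
  · have hJ : (maximalIdeal R).map (iterateFrobenius R p k) ≤ I :=
      (map_le_pow p k).trans ((Ideal.pow_le_pow_right
        (Nat.lt_pow_self (Fact.out : p.Prime).one_lt).le).trans hk)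
    obtain ⟨k', hk'⟩ := exists_pow_le (R := R) p k
    have := submult (iterateFrobenius R p 1) I _ hJ k' hk'
    rw [map_map_frob, h1] at this
    have e1 : len ((maximalIdeal R).map (iterateFrobenius R p (k + 1))) =
        ((p ^ d * (p ^ k) ^ d : ℕ) : ℕ∞) := by
      refine (h (k + 1)).trans ?_
      rw [pow_succ, mul_pow, mul_comm]
    have e2 : len ((maximalIdeal R).map (iterateFrobenius R p k)) = (((p ^ k) ^ d : ℕ) : ℕ∞) := h k
    rw [e1, e2, ← Nat.cast_mul, add_comm] at this
    exact (ENat.add_le_add_iff_right (ENat.natCast_ne_top _)).1 this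

lemma two_one (d : ℕ) (hd : ringKrullDim R = d) (h : RingHom.Flat (frobenius R p)) :
    IsRegularLocal R := by
  obtain ⟨n, x, hx, hn, hmin⟩ := exists_min_gens (R := R)
  have hdn : d ≤ n := by
    have := ringKrullDim_le_spanFinrank_maximalIdeal R
    rw [hd, ← hn] at this
    exact_mod_cast this
  have hnd : n ≤ d := by
    obtain ⟨s, hs1, hs2, hs3⟩ := exists_sop (R := R) d hd
    obtain ⟨M, hM⟩ := ENat.ne_top_iff_exists.1 hs3
    have : p ^ n ≤ p ^ d := by
      refine nat_aux (C := M) fun e => ?_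
      have h1 := indep_of_flat _ (flat_iterate p h e) x hx hmin
      simp only [iterateFrobenius_def] at h1
      have h2 := lech x (by rw [hx]; exact (maximalIdeal.isMaximal R).ne_top) _ (fun _ => p ^ e) rfl
        (fun _ => Nat.one_le_pow _ _ (Fact.out : p.Prime).pos) h1
      have h3 : Ideal.span (Set.range fun i => x i ^ p ^ e) =
          (maximalIdeal R).map (iterateFrobenius R p e) := by
        rw [← hx, Ideal.map_span, ← Set.range_comp]
        simp only [Function.comp_def, iterateFrobenius_def]
      rw [h3] at h2
      have h4 := h2.trans (lam_le_of_finset p s hs1 e)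
      rw [← hM, hs2, ← Nat.cast_mul] at h4
      have h5 := Nat.cast_le.1 h4
      simp only [Finset.prod_const, Finset.card_univ, Fintype.card_fin] at h5
      calc (p ^ n) ^ e = (p ^ e) ^ n := by rw [← pow_mul, ← pow_mul, mul_comm]
        _ ≤ (p ^ e) ^ d * M := h5
        _ = _ := by rw [← pow_mul, ← pow_mul, mul_comm, mul_comm e d]
    exact (Nat.pow_le_pow_iff_right (Fact.out : p.Prime).one_lt).1 this
  obtain rfl : n = d := le_antisymm hnd hdn
  exact ⟨inferInstance, n, x, hd, hx.symm⟩

end frob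
end KunzAux

/-- **Kunz's theorem.** For a Noetherian local ring `(R, 𝔪)` of Krull dimension `d`
containing a field of characteristic `p > 0`, the following are equivalent:
(1) `R` is regular; (2) the Frobenius map is flat; (3) `ℓ_R(R/𝔪^{[p]}) = p ^ d`;
(4) `ℓ_R(R/𝔪^{[p^e]}) = (p^e) ^ d` for every `e`. -/
theorem kunz_theorem (R : Type*) [CommRing R] [IsLocalRing R] [IsNoetherianRing R]
    (p : ℕ) [Fact p.Prime] [CharP R p] (d : ℕ) (hd : ringKrullDim R = d) :
    List.TFAE
      [IsRegularLocal R,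
       RingHom.Flat (frobeniusRingHom R p),
       moduleLength R (R ⧸ (IsLocalRing.maximalIdeal R).bracketPow p) = (p : ℕ∞) ^ d,
       ∀ e : ℕ,
         moduleLength R (R ⧸ (IsLocalRing.maximalIdeal R).bracketPow (p ^ e)) =
           ((p : ℕ∞) ^ e) ^ d] := by
  have hm : ∀ e : ℕ, moduleLength R (R ⧸ (IsLocalRing.maximalIdeal R).bracketPow (p ^ e)) =
      KunzAux.lam R p e := by
    intro e
    rw [KunzAux.bracketPow_eq]
    exact (Module.length_eq_height R _).symm
  have hm1 : moduleLength R (R ⧸ (IsLocalRing.maximalIdeal R).bracketPow p) =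
      KunzAux.lam R p 1 := by
    have := hm 1
    rwa [pow_one] at this
  simp_rw [hm, hm1]
  tfae_have 1 → 3 := fun h => by
    rw [KunzAux.one_three p d hd h]; push_cast; rfl
  tfae_have 3 → 4 := fun h e => by
    rw [KunzAux.three_four p d hd (by rw [h]; push_cast; rfl) e]; push_cast; rfl
  tfae_have 4 → 2 := fun h =>
    KunzAux.four_two p d fun e => by rw [h e]; push_cast; rfl
  tfae_have 2 → 1 := fun h => KunzAux.two_one p d hd h
  tfae_finish
end

section
/- Let (R, 𝔪) be a regular local ring containing a field of prime characteristic p. Then every ideal of R is tightly closed, i.e., I^* = I for every ideal I ⊆ R. -/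
open IsLocalRing Filter Topology
open scoped TensorProduct

section AuxLemmas
open scoped Pointwise
universe auxu auxv


open RingTheory.Sequence in
lemma aux_exact_list {R : Type auxu} [CommRing R] (rs : List R) :
    ∀ (A B C : Type auxv) [AddCommGroup A] [AddCommGroup B] [AddCommGroup C]
      [Module R A] [Module R B] [Module R C] (f : A →ₗ[R] B) (g : B →ₗ[R] C),
      Function.Injective f → Function.Surjective g → Function.Exact f g →
      IsWeaklyRegular A rs → IsWeaklyRegular C rs →
      IsWeaklyRegular B rs ∧
        Module.length R (B ⧸ (Ideal.ofList rs • ⊤ : Submodule R B)) =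
        Module.length R (A ⧸ (Ideal.ofList rs • ⊤ : Submodule R A)) +
        Module.length R (C ⧸ (Ideal.ofList rs • ⊤ : Submodule R C)) := by
  induction rs with
  | nil =>
    intro A B C _ _ _ _ _ _ f g hf hg hfg _ _
    refine ⟨IsWeaklyRegular.nil _ _, ?_⟩
    have e : ∀ (X : Type auxv) [AddCommGroup X] [Module R X],
        Module.length R (X ⧸ (Ideal.ofList ([] : List R) • ⊤ : Submodule R X)) =
          Module.length R X := fun X _ _ =>
      (Submodule.quotEquivOfEqBot _ (by simp)).length_eq
    rw [e, e, e]
    exact Module.length_eq_add_of_exact f g hf hg hfg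
  | cons r rs ih =>
    intro A B C _ _ _ _ _ _ f g hf hg hfg hA hC
    rw [isWeaklyRegular_cons_iff] at hA hC ⊢
    have hB : IsSMulRegular B r := by
      rw [isSMulRegular_iff_right_eq_zero_of_smul]
      intro b hb
      have h1 : g b = 0 := (isSMulRegular_iff_right_eq_zero_of_smul).1 hC.1 _ (by rw [← map_smul, hb, map_zero])
      obtain ⟨a, rfl⟩ := (hfg b).1 h1
      rw [← map_smul] at hb
      have : r • a = 0 := hf (by rw [hb, map_zero])
      rw [(isSMulRegular_iff_right_eq_zero_of_smul).1 hA.1 _ this, map_zero]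
    have hinj : Function.Injective (QuotSMulTop.map r f) := by
      rw [injective_iff_map_eq_zero]
      intro x hx
      obtain ⟨a, rfl⟩ := Submodule.Quotient.mk_surjective _ x
      rw [QuotSMulTop.map_apply_mk, Submodule.Quotient.mk_eq_zero,
        Submodule.mem_smul_pointwise_iff_exists] at hx
      obtain ⟨b, -, hb⟩ := hx
      have h1 : g b = 0 := (isSMulRegular_iff_right_eq_zero_of_smul).1 hC.1 _
        (by rw [← map_smul, hb, hfg.apply_apply_eq_zero])
      obtain ⟨a', rfl⟩ := (hfg b).1 h1
      rw [← map_smul] at hb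
      rw [Submodule.Quotient.mk_eq_zero, ← hf hb]
      exact Submodule.smul_mem_pointwise_smul _ _ _ trivial
    obtain ⟨h1, h2⟩ := ih _ _ _ (QuotSMulTop.map r f) (QuotSMulTop.map r g) hinj
      (QuotSMulTop.map_surjective r hg) (QuotSMulTop.map_exact r hfg hg) hA.2 hC.2
    refine ⟨⟨hB, h1⟩, ?_⟩
    rw [(Submodule.quotOfListConsSMulTopEquivQuotSMulTopInner A r rs).length_eq,
      (Submodule.quotOfListConsSMulTopEquivQuotSMulTopInner B r rs).length_eq,
      (Submodule.quotOfListConsSMulTopEquivQuotSMulTopInner C r rs).length_eq, h2]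

open RingTheory.Sequence in
lemma aux_pow_one {R : Type auxu} [CommRing R] (r : R) (rs : List R) (M : Type auxv) [AddCommGroup M]
    [Module R M] (hr : IsSMulRegular M r) (h : IsWeaklyRegular (QuotSMulTop r M) rs) (n : ℕ) :
    IsWeaklyRegular (QuotSMulTop (r ^ n) M) rs ∧
      Module.length R (QuotSMulTop (r ^ n) M ⧸ (Ideal.ofList rs • ⊤ : Submodule R (QuotSMulTop (r ^ n) M))) =
      n * Module.length R (QuotSMulTop r M ⧸ (Ideal.ofList rs • ⊤ : Submodule R (QuotSMulTop r M))) := by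
  induction n with
  | zero =>
    have : Subsingleton (QuotSMulTop (r ^ 0) M) := by
      rw [pow_zero]
      exact Submodule.Quotient.subsingleton_iff.2 (by simp)
    refine ⟨⟨fun i hi => ?_⟩, ?_⟩
    · intro a b _
      exact Subsingleton.elim _ _
    · rw [Module.length_eq_zero]; simp
  | succ n ih =>
    let f : QuotSMulTop (r ^ n) M →ₗ[R] QuotSMulTop (r ^ (n + 1)) M :=
      Submodule.mapQ _ _ (LinearMap.lsmul R M r) (by
        intro x hx
        rw [Submodule.mem_smul_pointwise_iff_exists] at hx
        obtain ⟨b, -, rfl⟩ := hx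
        rw [Submodule.mem_comap, LinearMap.lsmul_apply, smul_smul, ← pow_succ']
        exact Submodule.smul_mem_pointwise_smul _ _ _ trivial)
    let g : QuotSMulTop (r ^ (n + 1)) M →ₗ[R] QuotSMulTop r M :=
      Submodule.mapQ _ _ LinearMap.id (by
        intro x hx
        rw [Submodule.mem_smul_pointwise_iff_exists] at hx
        obtain ⟨b, -, rfl⟩ := hx
        rw [Submodule.mem_comap, LinearMap.id_apply, pow_succ', ← smul_smul]
        exact Submodule.smul_mem_pointwise_smul _ _ _ trivial)
    have hf : Function.Injective f := by
      rw [injective_iff_map_eq_zero]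
      intro x hx
      obtain ⟨a, rfl⟩ := Submodule.Quotient.mk_surjective _ x
      rw [Submodule.mapQ_apply, Submodule.Quotient.mk_eq_zero,
        Submodule.mem_smul_pointwise_iff_exists] at hx
      obtain ⟨b, -, hb⟩ := hx
      rw [LinearMap.lsmul_apply, pow_succ', ← smul_smul] at hb
      rw [Submodule.Quotient.mk_eq_zero, ← hr hb]
      exact Submodule.smul_mem_pointwise_smul _ _ _ trivial
    have hg : Function.Surjective g := by
      intro x
      obtain ⟨a, rfl⟩ := Submodule.Quotient.mk_surjective _ x
      exact ⟨Submodule.Quotient.mk a, rfl⟩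
    have hfg : Function.Exact f g := by
      intro x
      obtain ⟨a, rfl⟩ := Submodule.Quotient.mk_surjective _ x
      rw [Submodule.mapQ_apply, Submodule.Quotient.mk_eq_zero,
        Submodule.mem_smul_pointwise_iff_exists]
      constructor
      · rintro ⟨b, -, hb⟩
        refine ⟨Submodule.Quotient.mk b, ?_⟩
        rw [Submodule.mapQ_apply, LinearMap.lsmul_apply, hb, LinearMap.id_apply]
      · rintro ⟨y, hy⟩
        obtain ⟨b, rfl⟩ := Submodule.Quotient.mk_surjective _ y
        rw [Submodule.mapQ_apply, Submodule.Quotient.eq,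
          Submodule.mem_smul_pointwise_iff_exists] at hy
        obtain ⟨c, -, hc⟩ := hy
        refine ⟨b - r ^ n • c, trivial, ?_⟩
        rw [smul_sub, smul_smul, ← pow_succ', hc, LinearMap.lsmul_apply, LinearMap.id_apply]
        abel
    obtain ⟨h1, h2⟩ := aux_exact_list rs _ _ _ f g hf hg hfg ih.1 h
    refine ⟨h1, ?_⟩
    rw [h2, ih.2]
    push_cast
    ring

open RingTheory.Sequence in
lemma aux_pow_list {R : Type auxu} [CommRing R] (q : ℕ) (rs : List R) :
    ∀ (M : Type auxv) [AddCommGroup M] [Module R M], IsWeaklyRegular M rs →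
      IsWeaklyRegular M (rs.map (· ^ q)) ∧
      Module.length R (M ⧸ (Ideal.ofList (rs.map (· ^ q)) • ⊤ : Submodule R M)) =
        (q : ℕ∞) ^ rs.length * Module.length R (M ⧸ (Ideal.ofList rs • ⊤ : Submodule R M)) := by
  induction rs with
  | nil => intro M _ _ _; exact ⟨IsWeaklyRegular.nil _ _, by
    rw [List.length_nil, pow_zero, one_mul]; rfl⟩
  | cons r rs ih =>
    intro M _ _ h
    rw [isWeaklyRegular_cons_iff] at h
    obtain ⟨h1, h2⟩ := ih _ h.2
    obtain ⟨h3, h4⟩ := aux_pow_one r _ M h.1 h1 q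
    rw [List.map_cons, isWeaklyRegular_cons_iff]
    refine ⟨⟨h.1.pow q, h3⟩, ?_⟩
    rw [(Submodule.quotOfListConsSMulTopEquivQuotSMulTopInner M (r ^ q) _).length_eq, h4, h2,
      (Submodule.quotOfListConsSMulTopEquivQuotSMulTopInner M r rs).length_eq, List.length_cons]
    ring


lemma aux_dim_le {R : Type*} [CommRing R] [IsLocalRing R] [IsNoetherianRing R] (rs : List R)
    (h : maximalIdeal R = Ideal.ofList rs) : ringKrullDim R ≤ rs.length := by
  classical
  refine (ringKrullDim_le_spanFinrank_maximalIdeal R).trans ?_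
  have h1 : ({r | r ∈ rs} : Set R) = (rs.toFinset : Set R) := by ext; simp
  rw [h, Ideal.ofList, h1]
  have := Submodule.spanFinrank_span_le_ncard_of_finite (R := R) (rs.toFinset.finite_toSet)
  rw [Set.ncard_coe_finset] at this
  exact_mod_cast this.trans (List.toFinset_card_le _)

lemma aux_exchange {R : Type*} [CommRing R] [IsLocalRing R] (rs : List R) :
    ∀ z : R, Ideal.ofList rs ≤ maximalIdeal R → z ∈ Ideal.ofList rs → z ∉ maximalIdeal R ^ 2 →
    ∃ rs' : List R, rs.length = rs'.length + 1 ∧ Ideal.ofList (z :: rs') = Ideal.ofList rs := by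
  induction rs with
  | nil => intro z _ hz hz2; simp at hz; simp [hz] at hz2
  | cons r rs ih =>
    intro z hle hz hz2
    rw [Ideal.ofList_cons] at hz hle
    obtain ⟨y, hy, w, hw, rfl⟩ := Submodule.mem_sup.1 hz
    obtain ⟨a, rfl⟩ := Ideal.mem_span_singleton'.1 hy
    have hr : r ∈ maximalIdeal R := hle (Ideal.mem_sup_left (Ideal.mem_span_singleton_self r))
    by_cases ha : a ∈ maximalIdeal R
    · have hw2 : w ∉ maximalIdeal R ^ 2 := fun h => hz2 (add_mem (by
        rw [pow_two]; exact Ideal.mul_mem_mul ha hr) h)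
      obtain ⟨rs', hl, he⟩ := ih w (le_sup_right.trans hle) hw hw2
      refine ⟨r :: rs', by simp [hl], ?_⟩
      rw [Ideal.ofList_cons r rs, ← he]
      simp only [Ideal.ofList_cons]
      apply le_antisymm
      · refine sup_le ?_ (sup_le le_sup_left (le_sup_right.trans le_sup_right))
        rw [Ideal.span_singleton_le_iff_mem]
        exact add_mem (Ideal.mem_sup_left (Ideal.mul_mem_left _ _ (Ideal.mem_span_singleton_self r)))
          (Ideal.mem_sup_right (Ideal.mem_sup_left (Ideal.mem_span_singleton_self w)))
      · refine sup_le (le_sup_left.trans le_sup_right) (sup_le ?_ (le_sup_right.trans le_sup_right))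
        rw [Ideal.span_singleton_le_iff_mem]
        have : w = (a * r + w) - a * r := by ring
        refine (congrArg (· ∈ _) this).mpr ?_
        exact sub_mem (Ideal.mem_sup_left (Ideal.mem_span_singleton_self _))
          (Ideal.mem_sup_right (Ideal.mem_sup_left (Ideal.mul_mem_left _ _ (Ideal.mem_span_singleton_self r))))
    · refine ⟨rs, by simp, ?_⟩
      have hu : IsUnit a := by simpa using ha
      obtain ⟨u, rfl⟩ := hu
      simp only [Ideal.ofList_cons]
      apply le_antisymm
      · refine sup_le ?_ le_sup_right
        rw [Ideal.span_singleton_le_iff_mem]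
        exact hz
      · refine sup_le ?_ le_sup_right
        rw [Ideal.span_singleton_le_iff_mem]
        have : r = (↑u⁻¹ : R) * ((↑u * r + w) - w) := by simp
        refine (congrArg (· ∈ _) this).mpr ?_
        exact Ideal.mul_mem_left _ _ (sub_mem (Ideal.mem_sup_left (Ideal.mem_span_singleton_self _))
          (Ideal.mem_sup_right hw))

lemma aux_quot {R : Type*} [CommRing R] [IsLocalRing R] [IsNoetherianRing R] (z : R) (rs : List R)
    (h : maximalIdeal R = Ideal.ofList (z :: rs)) (hd : ringKrullDim R = (rs.length + 1 : ℕ)) :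
    ∃ _ : IsLocalRing (R ⧸ Ideal.span {z}),
      maximalIdeal (R ⧸ Ideal.span {z}) =
        Ideal.ofList (rs.map (algebraMap R (R ⧸ Ideal.span {z}))) ∧
      ringKrullDim (R ⧸ Ideal.span {z}) = rs.length := by
  have hz : z ∈ maximalIdeal R := by
    rw [h, Ideal.ofList_cons]; exact Ideal.mem_sup_left (Ideal.mem_span_singleton_self z)
  have hne : Ideal.span {z} ≠ ⊤ := fun hh => (maximalIdeal.isMaximal R).ne_top
    (top_le_iff.1 (hh ▸ (Ideal.span_singleton_le_iff_mem _).2 hz))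
  have : Nontrivial (R ⧸ Ideal.span {z}) := Ideal.Quotient.nontrivial_iff.2 hne
  have hloc : IsLocalRing (R ⧸ Ideal.span {z}) :=
    IsLocalRing.of_surjective' (Ideal.Quotient.mk _) Ideal.Quotient.mk_surjective
  have hm : maximalIdeal (R ⧸ Ideal.span {z}) =
        Ideal.ofList (rs.map (algebraMap R (R ⧸ Ideal.span {z}))) := by
    have h1 : maximalIdeal (R ⧸ Ideal.span {z}) =
        (maximalIdeal R).map (algebraMap R (R ⧸ Ideal.span {z})) :=
      (IsLocalRing.map_maximalIdeal_of_surjective _ Ideal.Quotient.mk_surjective).symm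
    rw [h1, h, Ideal.map_ofList, List.map_cons, Ideal.ofList_cons]
    have : algebraMap R (R ⧸ Ideal.span {z}) z = 0 := by
      rw [Ideal.Quotient.algebraMap_eq, Ideal.Quotient.eq_zero_iff_mem]
      exact Ideal.mem_span_singleton_self z
    simp
  refine ⟨hloc, hm, le_antisymm ?_ ?_⟩
  · simpa using aux_dim_le _ hm
  · have h1 := ringKrullDim_le_ringKrullDim_quotSMulTop_succ hz
    have h2 : Ideal.span {z} = z • (⊤ : Ideal R) := by simp [← Submodule.ideal_span_singleton_smul]
    rw [hd, ← h2] at h1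
    push_cast at h1
    exact ENat.WithBot.add_le_add_one_right_iff.1 h1

open RingTheory.Sequence in
lemma aux_regular (n : ℕ) : ∀ (R : Type auxu) [CommRing R] [IsLocalRing R] [IsNoetherianRing R]
    (rs : List R), rs.length = n → maximalIdeal R = Ideal.ofList rs →
    ringKrullDim R = rs.length → IsDomain R ∧ IsWeaklyRegular R rs := by
  induction n with
  | zero =>
    intro R _ _ _ rs hl hm hd
    obtain rfl := List.length_eq_zero_iff.1 hl
    rw [Ideal.ofList_nil] at hm
    exact ⟨(IsLocalRing.isField_iff_maximalIdeal_eq.2 hm).isDomain, IsWeaklyRegular.nil _ _⟩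
  | succ n ih =>
    intro R _ _ _ rs hl hm hd
    have hmin : maximalIdeal R ∉ minimalPrimes R := by
      intro h
      have h1 := IsLocalRing.maximalIdeal_height_eq_ringKrullDim (R := R)
      have h2 : (maximalIdeal R).height = 0 := by
        rw [Ideal.height_eq_zero_iff]; exact h
      rw [h2, hd, hl] at h1
      norm_cast at h1
    obtain ⟨z, hzm, hz2, hzP⟩ : ∃ z ∈ maximalIdeal R, z ∉ maximalIdeal R ^ 2 ∧
        ∀ P ∈ minimalPrimes R, z ∉ P := by
      by_contra! hcon
      have hfin : (insert (maximalIdeal R ^ 2) (minimalPrimes R)).Finite :=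
        (minimalPrimes.finite_of_isNoetherianRing R).insert _
      have := (Ideal.subset_union_prime_finite hfin (f := id) (I := maximalIdeal R)
        (maximalIdeal R ^ 2) (maximalIdeal R ^ 2) (by
          rintro i (rfl | hi) h1 h2
          · exact absurd rfl h1
          · exact hi.1.1)).1 (by
          intro z hz
          by_cases h2 : z ∈ maximalIdeal R ^ 2
          · exact Set.mem_biUnion (Set.mem_insert _ _) h2
          · obtain ⟨P, hP, hzP⟩ := hcon z hz h2
            exact Set.mem_biUnion (Set.mem_insert_of_mem _ hP) hzP)
      obtain ⟨J, rfl | hJ, hle⟩ := this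
      · have h0 : maximalIdeal R = ⊥ := by
          refine Submodule.eq_bot_of_le_smul_of_le_jacobson_bot (maximalIdeal R) _
            (IsNoetherian.noetherian _) ?_ (maximalIdeal_le_jacobson _)
          simpa [pow_two] using hle
        have hb : (⊥ : Ideal R).IsPrime := h0 ▸ inferInstance
        exact hmin ⟨⟨inferInstance, bot_le⟩, fun y _ _ => h0 ▸ bot_le⟩
      · have := hJ.1.1
        have h1 : maximalIdeal R = J := (maximalIdeal.isMaximal R).eq_of_le this.ne_top hle
        exact hmin (h1 ▸ hJ)
    obtain ⟨rs', hl', he⟩ := aux_exchange rs z hm.ge (hm ▸ hzm) hz2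
    obtain ⟨hloc, hm', hd'⟩ := aux_quot z rs' (hm.trans he.symm) (by rw [hd, hl'])
    have hdom := (ih (R ⧸ Ideal.span {z}) _ (by simp; omega) hm' (by simpa using hd')).1
    have hprime : (Ideal.span {z}).IsPrime := (Ideal.Quotient.isDomain_iff_prime _).1 hdom
    have hR : IsDomain R := by
      obtain ⟨P, hP, hPz⟩ := Ideal.exists_minimalPrimes_le (I := ⊥) (J := Ideal.span {z}) bot_le
      have hPp : P.IsPrime := hP.1.1
      have hP0 : P = ⊥ := by
        refine Submodule.eq_bot_of_le_smul_of_le_jacobson_bot (maximalIdeal R) _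
            (IsNoetherian.noetherian _) ?_ (maximalIdeal_le_jacobson _)
        intro x hx
        obtain ⟨a, rfl⟩ := Ideal.mem_span_singleton'.1 (hPz hx)
        have ha : a ∈ P := (hPp.mem_or_mem hx).resolve_right (hzP P hP)
        rw [mul_comm]
        exact Ideal.mul_mem_mul hzm ha
      rw [hP0] at hPp
      exact IsDomain.of_bot_isPrime R
    refine ⟨hR, ?_⟩
    match rs, hl, hm, hd with
    | r :: rs, hl, hm, hd =>
      have hr : r ≠ 0 := by
        rintro rfl
        have := aux_dim_le rs (by rw [hm, Ideal.ofList_cons]; simp)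
        rw [hd, List.length_cons] at this
        norm_cast at this
        omega
      obtain ⟨hloc, hm', hd'⟩ := aux_quot r rs hm (by rw [hd, List.length_cons])
      have hw := (ih (R ⧸ Ideal.span {r}) _ (by simpa using hl) hm' (by simpa using hd')).2
      rw [isWeaklyRegular_map_algebraMap_iff] at hw
      rw [isWeaklyRegular_cons_iff]
      refine ⟨?_, ?_⟩
      · intro a b hab
        exact mul_left_cancel₀ hr hab
      · refine (LinearEquiv.isWeaklyRegular_congr (Submodule.quotEquivOfEq _ _ ?_) rs).1 hw
        simp [← Submodule.ideal_span_singleton_smul]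

/-- colength of an ideal -/
noncomputable def auxLam {R : Type*} [CommRing R] (I : Ideal R) : ℕ∞ := Module.length R (R ⧸ I)

lemma auxLam_anti {R : Type*} [CommRing R] {I J : Ideal R} (h : I ≤ J) : auxLam J ≤ auxLam I :=
  Module.length_le_of_surjective (Submodule.factor h) (Submodule.factor_surjective h)

lemma auxLam_strict {R : Type*} [CommRing R] {I J : Ideal R} (h : I < J) (hI : auxLam I ≠ ⊤) :
    auxLam J + 1 ≤ auxLam I := by
  have hJ : auxLam J ≠ ⊤ := ne_top_of_le_ne_top hI (auxLam_anti h.le)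
  rw [ENat.add_one_le_iff hJ]
  unfold auxLam at *
  rw [Module.length_quotient] at *
  rw [Module.length_quotient] at *
  exact Order.coheight_strictAnti h (lt_top_iff_ne_top.2 hJ)

lemma auxLam_top {R : Type*} [CommRing R] : auxLam (⊤ : Ideal R) = 0 := by
  have : Subsingleton (R ⧸ (⊤ : Ideal R)) := Ideal.Quotient.subsingleton_iff.2 rfl
  exact Module.length_eq_zero

lemma auxLam_colon {R : Type*} [CommRing R] (A K : Ideal R) (z : R)
    (h : ∀ k ∈ K, k * z ∈ A) : auxLam A ≤ auxLam (A ⊔ Ideal.span {z}) + auxLam K := by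
  let f : (R ⧸ K) →ₗ[R] (R ⧸ A) := Submodule.mapQ K A (LinearMap.mulRight R z) (by
    intro k hk; exact h k hk)
  let g : (R ⧸ A) →ₗ[R] (R ⧸ (A ⊔ Ideal.span {z})) := Submodule.factor le_sup_left
  have hg : Function.Surjective g := Submodule.factor_surjective _
  unfold auxLam
  rw [Module.length_eq_add_of_exact (LinearMap.ker g).subtype g (Submodule.subtype_injective _) hg
    (LinearMap.exact_subtype_ker_map g), add_comm]
  gcongr
  have hle : LinearMap.ker g ≤ LinearMap.range f := by
    intro x hx
    obtain ⟨a, rfl⟩ := Submodule.Quotient.mk_surjective _ x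
    have hx' : a ∈ A ⊔ Ideal.span {z} := by
      rw [LinearMap.mem_ker] at hx
      exact (Submodule.Quotient.mk_eq_zero _).1 hx
    obtain ⟨y, hy, w, hw, rfl⟩ := Submodule.mem_sup.1 hx'
    obtain ⟨b, rfl⟩ := Ideal.mem_span_singleton'.1 hw
    refine ⟨Submodule.Quotient.mk b, ?_⟩
    change (Submodule.Quotient.mk (LinearMap.mulRight R z b) : R ⧸ A) = _
    rw [Submodule.Quotient.eq]
    have : LinearMap.mulRight R z b - (y + b * z) = -y := by simp
    rw [this]
    exact neg_mem hy
  exact (Module.length_le_of_injective (Submodule.inclusion hle)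
    (Submodule.inclusion_injective hle)).trans
    (Module.length_le_of_surjective f.rangeRestrict f.surjective_rangeRestrict)

lemma aux_bracket {R : Type*} [CommRing R] (p : ℕ) [Fact p.Prime] [CharP R p] (I : Ideal R)
    (e : ℕ) : I.bracketPow (p ^ e) = I.map (iterateFrobenius R p e) := by
  have : ExpChar R p := ExpChar.prime Fact.out
  rfl

lemma aux_bracket_bracket {R : Type*} [CommRing R] (p : ℕ) [Fact p.Prime] [CharP R p] (I : Ideal R)
    (e e' : ℕ) : (I.bracketPow (p ^ e)).bracketPow (p ^ e') = I.bracketPow (p ^ (e + e')) := by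
  rw [aux_bracket, aux_bracket, aux_bracket, Ideal.map_map]
  congr 1
  ext x
  simp [iterateFrobenius_def, pow_add, pow_mul]

lemma aux_bracket_sup {R : Type*} [CommRing R] (p : ℕ) [Fact p.Prime] [CharP R p] (I : Ideal R)
    (y : R) (e : ℕ) : (I ⊔ Ideal.span {y}).bracketPow (p ^ e) =
      I.bracketPow (p ^ e) ⊔ Ideal.span {y ^ p ^ e} := by
  rw [aux_bracket, aux_bracket, Ideal.map_sup, Ideal.map_span, Set.image_singleton,
    iterateFrobenius_def]

lemma aux_bracket_le {R : Type*} [CommRing R] (I : Ideal R) (q : ℕ) :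
    I.bracketPow q ≤ I ^ q := by
  refine Ideal.span_le.2 ?_
  rintro _ ⟨a, ha, rfl⟩
  exact Ideal.pow_mem_pow ha q

lemma aux_bracket_mono {R : Type*} [CommRing R] {I J : Ideal R} (h : I ≤ J) (q : ℕ) :
    I.bracketPow q ≤ J.bracketPow q :=
  Ideal.span_mono (Set.image_mono h)

lemma aux_socle {R : Type*} [CommRing R] (m I J : Ideal R) (N : ℕ) (hN : m ^ N ≤ I)
    (hJ : ¬ J ≤ I) : ∃ y ∈ J, y ∉ I ∧ ∀ k ∈ m, k * y ∈ I := by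
  classical
  have hex : ∃ n, m ^ n * J ≤ I := ⟨N, le_trans Ideal.mul_le_left hN⟩
  have h0 : Nat.find hex ≠ 0 := by
    intro h
    have := Nat.find_spec hex
    rw [h, pow_zero, one_mul] at this
    exact hJ this
  obtain ⟨n, hn⟩ := Nat.exists_eq_succ_of_ne_zero h0
  have h1 : ¬ m ^ n * J ≤ I := Nat.find_min hex (by omega)
  obtain ⟨y, hy, hyI⟩ := SetLike.not_le_iff_exists.1 h1
  refine ⟨y, (Ideal.mul_le_right : m ^ n * J ≤ J) hy, hyI, fun k hk => ?_⟩
  have h2 := Nat.find_spec hex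
  rw [hn, Nat.succ_eq_add_one, pow_succ', mul_assoc] at h2
  exact h2 (Ideal.mul_mem_mul hk hy)

lemma aux_bracket_mul {R : Type*} [CommRing R] (p : ℕ) [Fact p.Prime] [CharP R p] (m I : Ideal R)
    (y : R) (h : ∀ k ∈ m, k * y ∈ I) (e : ℕ) :
    ∀ k ∈ m.bracketPow (p ^ e), k * y ^ p ^ e ∈ I.bracketPow (p ^ e) := by
  intro k hk
  refine Submodule.span_induction ?_ ?_ ?_ ?_ hk
  · rintro _ ⟨a, ha, rfl⟩
    refine Ideal.subset_span ⟨a * y, h a ha, ?_⟩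
    simp [mul_pow]
  · simp
  · intro a b _ _ ha hb
    rw [add_mul]; exact add_mem ha hb
  · intro a b _ hb
    rw [smul_eq_mul, mul_assoc]; exact Ideal.mul_mem_left _ _ hb

lemma aux_filtration {R : Type*} [CommRing R] [IsNoetherianRing R] (p : ℕ) [Fact p.Prime]
    [CharP R p] (m : Ideal R) (e N : ℕ) (J : Ideal R) :
    ∀ I : Ideal R, m ^ N ≤ I → auxLam I ≠ ⊤ → I ≤ J →
      auxLam (I.bracketPow (p ^ e)) + auxLam (m.bracketPow (p ^ e)) * auxLam J ≤
      auxLam (J.bracketPow (p ^ e)) + auxLam (m.bracketPow (p ^ e)) * auxLam I := by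
  intro I
  induction I using WellFoundedGT.induction with
  | ind I ih =>
    intro hN hfin hIJ
    by_cases hJI : J ≤ I
    · rw [le_antisymm hIJ hJI]
    · obtain ⟨y, hyJ, hyI, hy⟩ := aux_socle m I J N hN hJI
      have hlt : I < I ⊔ Ideal.span {y} := by
        refine lt_of_le_of_ne le_sup_left fun h => hyI ?_
        rw [h]; exact Ideal.mem_sup_right (Ideal.mem_span_singleton_self y)
      have h1 := ih _ hlt (hN.trans hlt.le)
        (ne_top_of_le_ne_top hfin (auxLam_anti hlt.le))
        (sup_le hIJ ((Ideal.span_singleton_le_iff_mem _).2 hyJ))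
      have h2 := auxLam_colon _ _ _ (aux_bracket_mul p m I y hy e)
      rw [← aux_bracket_sup] at h2
      have h3 := auxLam_strict hlt hfin
      set I' := I ⊔ Ideal.span {y}
      set L := auxLam (m.bracketPow (p ^ e))
      calc auxLam (I.bracketPow (p ^ e)) + L * auxLam J
          ≤ (auxLam (I'.bracketPow (p ^ e)) + L) + L * auxLam J := by gcongr
        _ = (auxLam (I'.bracketPow (p ^ e)) + L * auxLam J) + L := by ring
        _ ≤ (auxLam (J.bracketPow (p ^ e)) + L * auxLam I') + L := by gcongr
        _ = auxLam (J.bracketPow (p ^ e)) + L * (auxLam I' + 1) := by ring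
        _ ≤ _ := by gcongr

open RingTheory.Sequence in
lemma aux_length {R : Type auxu} [CommRing R] [IsLocalRing R] [IsNoetherianRing R]
    (p : ℕ) [Fact p.Prime] [CharP R p] (rs : List R) (hm : maximalIdeal R = Ideal.ofList rs)
    (hd : ringKrullDim R = rs.length) (e : ℕ) :
    auxLam ((maximalIdeal R).bracketPow (p ^ e)) = ((p ^ e) ^ rs.length : ℕ) := by
  have hw := (aux_regular rs.length R rs rfl hm hd).2
  have h := (aux_pow_list (p ^ e) rs R hw).2
  have h1 : (maximalIdeal R).bracketPow (p ^ e) = Ideal.ofList (rs.map (· ^ (p ^ e))) := by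
    rw [aux_bracket, hm, Ideal.map_ofList]
    congr 2
  rw [smul_eq_mul, smul_eq_mul, Ideal.mul_top, Ideal.mul_top, ← h1, ← hm] at h
  have hs : IsSimpleModule R (R ⧸ maximalIdeal R) := isSimpleModule_iff_isCoatom.2
    (Ideal.isMaximal_def.1 inferInstance)
  rw [Module.length_eq_one R (R ⧸ maximalIdeal R), mul_one] at h
  unfold auxLam
  rw [h]
  push_cast
  rfl

/-- The main step, for ideals containing a Frobenius power of the maximal ideal. -/
lemma aux_main {R : Type auxu} [CommRing R] [IsLocalRing R] [IsNoetherianRing R]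
    (p : ℕ) [Fact p.Prime] [CharP R p] (rs : List R) (hm : maximalIdeal R = Ideal.ofList rs)
    (hd : ringKrullDim R = rs.length) (I : Ideal R) (E : ℕ)
    (hE : (maximalIdeal R).bracketPow (p ^ E) ≤ I) (x : R) (hx : x ∈ tightClosure p I) :
    x ∈ I := by
  by_contra hxI
  have hlen := aux_length p rs hm hd
  have hfinE : auxLam ((maximalIdeal R).bracketPow (p ^ E)) ≠ ⊤ := by
    rw [hlen]; exact ENat.natCast_ne_top _
  have hfin : ∀ K, (maximalIdeal R).bracketPow (p ^ E) ≤ K → auxLam K ≠ ⊤ := fun K hK =>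
    ne_top_of_le_ne_top hfinE (auxLam_anti hK)
  obtain ⟨N, hN⟩ : ∃ N, maximalIdeal R ^ N ≤ (maximalIdeal R).bracketPow (p ^ E) := by
    obtain ⟨N, hN⟩ := Ideal.exists_radical_pow_le_of_fg ((maximalIdeal R).bracketPow (p ^ E))
      (IsNoetherian.noetherian _)
    refine ⟨N, (Ideal.pow_right_mono ?_ N).trans hN⟩
    intro a ha
    exact ⟨p ^ E, Ideal.subset_span ⟨a, ha, rfl⟩⟩
  -- multiplicativity of colength
  have hmul : ∀ K, (maximalIdeal R).bracketPow (p ^ E) ≤ K → ∀ e,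
      auxLam (K.bracketPow (p ^ e)) = ((p ^ e) ^ rs.length : ℕ) * auxLam K := by
    intro K hK e
    have htop : auxLam ((⊤ : Ideal R).bracketPow (p ^ e)) = 0 := by
      rw [aux_bracket, Ideal.map_top, auxLam_top]
    apply le_antisymm
    · have := aux_filtration p (maximalIdeal R) e N ⊤ K (hN.trans hK) (hfin K hK) le_top
      rw [auxLam_top, htop, hlen] at this
      simpa using this
    · have := aux_filtration p (maximalIdeal R) e N K _ hN hfinE hK
      rw [aux_bracket_bracket, hlen, hlen, hlen, pow_add, mul_pow, Nat.cast_mul,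
        mul_comm (((p ^ E) ^ rs.length : ℕ) : ℕ∞), add_comm (auxLam _)] at this
      refine (ENat.add_le_add_iff_left ?_).1 this
      rw [← Nat.cast_mul]; exact ENat.natCast_ne_top _
  obtain ⟨y, hyx, hyI, hy⟩ := aux_socle (maximalIdeal R) I (Ideal.span {x}) N (hN.trans hE)
    (fun h => hxI (h (Ideal.mem_span_singleton_self x)))
  obtain ⟨b, rfl⟩ := Ideal.mem_span_singleton'.1 hyx
  obtain ⟨c, hc, N', hcx⟩ := hx
  have hlt : I < I ⊔ Ideal.span {b * x} := by
    refine lt_of_le_of_ne le_sup_left fun h => hyI ?_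
    rw [h]; exact Ideal.mem_sup_right (Ideal.mem_span_singleton_self _)
  have hcm : ∀ e, N' ≤ e → c ∈ (maximalIdeal R).bracketPow (p ^ e) := by
    intro e he
    by_contra hcn
    set K := (maximalIdeal R).bracketPow (p ^ e) ⊔ Ideal.span {c} with hK
    have hKlt : (maximalIdeal R).bracketPow (p ^ e) < K := by
      refine lt_of_le_of_ne le_sup_left fun h => hcn ?_
      rw [h]; exact Ideal.mem_sup_right (Ideal.mem_span_singleton_self _)
    have h1 := auxLam_strict hKlt (by rw [hlen]; exact ENat.natCast_ne_top _)
    have h2 : auxLam (I.bracketPow (p ^ e)) ≤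
        auxLam (I.bracketPow (p ^ e) ⊔ Ideal.span {(b * x) ^ p ^ e}) + auxLam K := by
      apply auxLam_colon
      intro k hk
      obtain ⟨u, hu, w, hw, rfl⟩ := Submodule.mem_sup.1 hk
      obtain ⟨a, rfl⟩ := Ideal.mem_span_singleton'.1 hw
      rw [add_mul]
      refine add_mem (aux_bracket_mul p _ I _ hy e u hu) ?_
      have : a * c * (b * x) ^ p ^ e = (a * b ^ p ^ e) * (c * x ^ p ^ e) := by
        rw [mul_pow]; ring
      rw [this]
      exact Ideal.mul_mem_left _ _ (hcx e he)
    rw [← aux_bracket_sup, hmul I hE, hmul _ (hE.trans hlt.le)] at h2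
    rw [hlen] at h1
    have h3 := auxLam_strict hlt (hfin I hE)
    have hf1 := hfin I hE
    have hf2 := hfin _ (hE.trans hlt.le)
    have hf3 : auxLam K ≠ ⊤ := ne_top_of_le_ne_top (ENat.natCast_ne_top _) (le_self_add.trans h1)
    lift auxLam I to ℕ using hf1 with l1
    lift auxLam (I ⊔ Ideal.span {b * x}) to ℕ using hf2 with l2
    lift auxLam K to ℕ using hf3 with l3
    norm_cast at h1 h2 h3
    nlinarith [Nat.mul_le_mul_left ((p ^ e) ^ rs.length) h3]
  have hc0 : c = 0 := by
    have h1 : c ∈ ⨅ i : ℕ, maximalIdeal R ^ i := by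
      rw [Submodule.mem_iInf]
      intro i
      have hi : i ≤ p ^ (max N' i) :=
        (Nat.lt_pow_self (Fact.out : p.Prime).one_lt).le.trans
          (Nat.pow_le_pow_right (Fact.out : p.Prime).pos (le_max_right N' i))
      exact Ideal.pow_le_pow_right hi (aux_bracket_le _ _ (hcm _ (le_max_left _ _)))
    rwa [Ideal.iInf_pow_eq_bot_of_isLocalRing _ (maximalIdeal.isMaximal R).ne_top] at h1
  obtain ⟨P, hP, -⟩ := Ideal.exists_minimalPrimes_le (I := ⊥) (J := maximalIdeal R) bot_le
  exact hc P hP (hc0 ▸ P.zero_mem)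

end AuxLemmas

/-- In a regular local ring of prime characteristic `p`, every ideal is tightly closed. -/
theorem regular_local_ideal_tightly_closed (R : Type*) [CommRing R] [IsLocalRing R]
    (p : ℕ) [Fact p.Prime] [CharP R p] (hreg : IsRegularLocal R) (I : Ideal R) :
    tightClosure p I = (I : Set R) := by
  obtain ⟨hnoeth, d, x, hd, hmx⟩ := hreg
  have hm : maximalIdeal R = Ideal.ofList (List.ofFn x) := by
    rw [hmx, Ideal.ofList]
    congr 1
    ext r
    simp [List.mem_ofFn]
  have hd' : ringKrullDim R = (List.ofFn x).length := by rw [hd, List.length_ofFn]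
  apply Set.Subset.antisymm
  · intro y hy
    have key : ∀ e : ℕ, y ∈ I ⊔ (maximalIdeal R).bracketPow (p ^ e) := by
      intro e
      refine aux_main p _ hm hd' _ e le_sup_right y ?_
      obtain ⟨c, hc, N, h⟩ := hy
      exact ⟨c, hc, N, fun e' he' => aux_bracket_mono le_sup_left _ (h e' he')⟩
    have h0 : (Submodule.Quotient.mk y : R ⧸ I) ∈
        (⨅ i : ℕ, maximalIdeal R ^ i • ⊤ : Submodule R (R ⧸ I)) := by
      rw [Submodule.mem_iInf]
      intro i
      obtain ⟨a, ha, b, hb, rfl⟩ := Submodule.mem_sup.1 (key i)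
      have hi : i ≤ p ^ i := (Nat.lt_pow_self (Fact.out : p.Prime).one_lt).le
      have hb' : b ∈ maximalIdeal R ^ i := Ideal.pow_le_pow_right hi (aux_bracket_le _ _ hb)
      have : (Submodule.Quotient.mk (a + b) : R ⧸ I) = b • (Submodule.Quotient.mk 1 : R ⧸ I) := by
        rw [← Submodule.Quotient.mk_smul, Submodule.Quotient.eq]
        simpa using ha
      rw [this]
      exact Submodule.smul_mem_smul hb' trivial
    rw [Ideal.iInf_pow_smul_eq_bot_of_isLocalRing _ (maximalIdeal.isMaximal R).ne_top] at h0
    exact (Submodule.Quotient.mk_eq_zero _).1 h0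
  · intro y hy
    refine ⟨1, fun P hP h1 => hP.1.1.ne_top ((Ideal.eq_top_iff_one _).2 h1), 0, fun e _ => ?_⟩
    rw [one_mul]
    exact Ideal.subset_span ⟨y, hy, rfl⟩
end

section
/- Let R be a reduced Noetherian commutative ring of prime characteristic p and I ⊆ R an ideal. Then the tight closure of I is contained in the integral closure of I: every x ∈ I^* is integral over I. -/
open IsLocalRing Filter Topology
open scoped TensorProduct

lemma tc_mem_sup_pow {R : Type*} [CommRing R] (I : Ideal R) (z : R) (n : ℕ) :
    ∀ y ∈ (I ⊔ Ideal.span {z}) ^ n, ∃ a : ℕ → R, (∀ i, a i ∈ I ^ i) ∧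
      y = ∑ i ∈ Finset.range (n + 1), a i * z ^ (n - i) := by
  induction n with
  | zero =>
    intro y _
    refine ⟨fun i => if i = 0 then y else 0, ?_, by simp⟩
    intro i
    by_cases h : i = 0
    · subst h; simp
    · simp [h]
  | succ n ih =>
    intro y hy
    rw [pow_succ'] at hy
    refine Submodule.mul_induction_on hy ?_ ?_
    · intro j hj y' hy'
      obtain ⟨b, hb, w, hw, rfl⟩ := Submodule.mem_sup.1 hj
      obtain ⟨d, rfl⟩ := Ideal.mem_span_singleton'.1 hw
      obtain ⟨a, ha, rfl⟩ := ih y' hy'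
      refine ⟨fun i => (if i = 0 then 0 else b * a (i - 1)) + (if i ≤ n then d * a i else 0),
        ?_, ?_⟩
      · intro i
        refine Ideal.add_mem _ ?_ ?_
        · rcases i with _ | i
          · simp
          · simpa [pow_succ'] using Ideal.mul_mem_mul hb (ha i)
        · split_ifs
          · exact Ideal.mul_mem_left _ _ (ha i)
          · exact Ideal.zero_mem _
      · simp only [add_mul, Finset.sum_add_distrib]
        congr 1
        · rw [Finset.sum_range_succ' _ (n + 1), Finset.mul_sum]
          simp [mul_assoc]
        · rw [Finset.sum_range_succ _ (n + 1), Finset.mul_sum]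
          simp only [Nat.not_succ_le_self, if_false, zero_mul, add_zero]
          refine Finset.sum_congr rfl fun i hi => ?_
          have hi' : i ≤ n := by simpa [Nat.lt_succ_iff] using hi
          rw [if_pos hi', Nat.succ_sub hi', pow_succ]
          ring
    · rintro x y ⟨a, ha, rfl⟩ ⟨b, hb, rfl⟩
      exact ⟨fun i => a i + b i, fun i => Ideal.add_mem _ (ha i) (hb i), by
        simp [add_mul, Finset.sum_add_distrib]⟩

lemma tc_integral_of_mem {R : Type*} [CommRing R] (I : Ideal R) (z : R) (n : ℕ)
    (h : z ^ (n + 1) ∈ I * (I ⊔ Ideal.span {z}) ^ n) : IsIntegralOverIdeal I z := by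
  have key : ∀ y ∈ I * (I ⊔ Ideal.span {z}) ^ n, ∃ a : ℕ → R, (∀ i, a i ∈ I ^ (i + 1)) ∧
      y = ∑ i ∈ Finset.range (n + 1), a i * z ^ (n - i) := by
    intro y hy
    refine Submodule.mul_induction_on hy ?_ ?_
    · intro b hb y' hy'
      obtain ⟨a, ha, rfl⟩ := tc_mem_sup_pow I z n y' hy'
      refine ⟨fun i => b * a i, fun i => ?_, by simp [Finset.mul_sum, mul_assoc]⟩
      rw [pow_succ']
      exact Ideal.mul_mem_mul hb (ha i)
    · rintro x y ⟨a, ha, rfl⟩ ⟨b, hb, rfl⟩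
      exact ⟨fun i => a i + b i, fun i => Ideal.add_mem _ (ha i) (hb i), by
        simp [add_mul, Finset.sum_add_distrib]⟩
  obtain ⟨a, ha, hz⟩ := key _ h
  refine ⟨n + 1, n.succ_pos, fun i => - a (i - 1), ?_, ?_⟩
  · intro i hi
    have := (Finset.mem_Icc.1 hi).1
    obtain ⟨j, rfl⟩ : ∃ j, i = j + 1 := ⟨i - 1, by omega⟩
    simpa using ha j
  · rw [← Finset.Ico_add_one_right_eq_Icc, Finset.sum_Ico_eq_sum_range, hz]
    simp [add_comm 1, ← Finset.sum_add_distrib]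

lemma tc_core {R : Type*} [CommRing R] [IsNoetherianRing R] (I : Ideal R) (z c : R)
    (hc : ∀ y, c * y = 0 → y = 0)
    (h : ∀ N : ℕ, ∃ n ≥ N, c * z ^ n ∈ I ^ n) : IsIntegralOverIdeal I z := by
  let L := Localization.Away z
  let w : L := IsLocalization.Away.invSelf z
  have hw : algebraMap R L z * w = 1 := IsLocalization.Away.mul_invSelf z
  let φ : R →ₗ[R] L := (LinearMap.mulRight R w).comp (Algebra.linearMap R L)
  have hφ : ∀ a, φ a = algebraMap R L a * w := fun a => rfl
  let M : Submodule R L := Submodule.map φ I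
  let B : Subalgebra R L := Algebra.adjoin R (M : Set L)
  obtain ⟨s, hs⟩ : M.FG := Submodule.FG.map φ (IsNoetherian.noetherian I)
  have : IsNoetherianRing B := by
    have hB : B = Algebra.adjoin R (s : Set L) := by
      rw [← Algebra.adjoin_span, hs]
    rw [hB]
    exact isNoetherianRing_of_fg ⟨s, rfl⟩
  let K : Ideal B := Ideal.span {b : B | (b : L) ∈ M}
  have hK : ∀ n, ∀ r ∈ I ^ n, ∃ b ∈ K ^ n, (b : L) = algebraMap R L r * w ^ n := by
    intro n
    induction n with
    | zero => intro r _; exact ⟨algebraMap R B r, by simp, by simp⟩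
    | succ n ih =>
      intro r hr
      rw [pow_succ] at hr
      refine Submodule.mul_induction_on hr ?_ ?_
      · intro x hx y hy
        obtain ⟨b, hb, hb'⟩ := ih x hx
        have hyM : φ y ∈ M := ⟨y, hy, rfl⟩
        refine ⟨b * ⟨φ y, Algebra.subset_adjoin hyM⟩, ?_, ?_⟩
        · rw [pow_succ]
          exact Ideal.mul_mem_mul hb (Ideal.subset_span hyM)
        · simp only [MulMemClass.coe_mul, hb', hφ, map_mul]
          ring
      · rintro x y ⟨a, ha, ha'⟩ ⟨b, hb, hb'⟩
        exact ⟨a + b, Ideal.add_mem _ ha hb, by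
          rw [AddMemClass.coe_add, ha', hb', map_add, add_mul]⟩
  have hcK : algebraMap R B c ∈ (⨅ i : ℕ, K ^ i • ⊤ : Submodule B B) := by
    rw [Submodule.mem_iInf]
    intro i
    obtain ⟨n, hn, hmem⟩ := h i
    obtain ⟨b, hb, hb'⟩ := hK n _ hmem
    have : b = algebraMap R B c := by
      apply Subtype.ext
      rw [hb', map_mul, map_pow, mul_assoc, ← mul_pow, hw, one_pow, mul_one]
      rfl
    rw [← this]
    simpa using Ideal.pow_le_pow_right hn hb
  obtain ⟨⟨k, hk⟩, hkc⟩ := (Ideal.mem_iInf_smul_pow_eq_bot_iff K _).1 hcK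
  have hcL : ∀ x : L, algebraMap R L c * x = 0 → x = 0 := by
    intro x hx
    obtain ⟨⟨r, t⟩, hr⟩ := IsLocalization.surj (Submonoid.powers z) x
    have h1 : algebraMap R L (c * r) = 0 := by
      rw [map_mul, ← hr, ← mul_assoc, hx, zero_mul]
    obtain ⟨m, hm⟩ := (IsLocalization.map_eq_zero_iff (Submonoid.powers z) L _).1 h1
    have h2 : (m : R) * r = 0 := hc _ (by rw [← hm]; ring)
    have h3 : algebraMap R L r = 0 :=
      (IsLocalization.map_eq_zero_iff (Submonoid.powers z) L _).2 ⟨m, h2⟩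
    rw [h3] at hr
    exact (IsLocalization.map_units L t).mul_left_eq_zero.1 hr
  have hk1 : (k : L) = 1 := by
    have h1 : (k : L) * algebraMap R L c = algebraMap R L c := congrArg Subtype.val hkc
    have := hcL ((k : L) - 1) (by rw [mul_sub, mul_comm, h1, mul_one, sub_self])
    exact sub_eq_zero.1 this
  let J := I ⊔ Ideal.span {z}
  have hzJ : z ∈ J := Ideal.mem_sup_right (Ideal.mem_span_singleton_self z)
  have hIJ : I ≤ J := le_sup_left
  have hwz : w * algebraMap R L z = 1 := by rw [mul_comm, hw]
  have hB : ∀ x ∈ B, ∃ n, ∃ r ∈ J ^ n, x * algebraMap R L z ^ n = algebraMap R L r := by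
    intro x hx
    refine Algebra.adjoin_induction ?_ ?_ ?_ ?_ hx
    · rintro _ ⟨a, ha, rfl⟩
      exact ⟨1, a, by simpa using hIJ ha, by rw [hφ, pow_one, mul_assoc, hwz, mul_one]⟩
    · intro r; exact ⟨0, r, by simp, by simp⟩
    · rintro x y _ _ ⟨n, r, hr, h1⟩ ⟨m, t, ht, h2⟩
      refine ⟨n + m, r * z ^ m + t * z ^ n, ?_, ?_⟩
      · refine Ideal.add_mem _ ?_ ?_
        · rw [pow_add]; exact Ideal.mul_mem_mul hr (Ideal.pow_mem_pow hzJ m)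
        · rw [add_comm, pow_add]; exact Ideal.mul_mem_mul ht (Ideal.pow_mem_pow hzJ n)
      · simp only [map_add, map_mul, map_pow, ← h1, ← h2]; ring
    · rintro x y _ _ ⟨n, r, hr, h1⟩ ⟨m, t, ht, h2⟩
      refine ⟨n + m, r * t, ?_, ?_⟩
      · rw [pow_add]; exact Ideal.mul_mem_mul hr ht
      · simp only [map_mul, ← h1, ← h2]; ring
  have hKJ : ∀ x ∈ K, ∃ n, ∃ r ∈ I * J ^ n,
      (x : L) * algebraMap R L z ^ (n + 1) = algebraMap R L r := by
    intro x hx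
    refine Submodule.span_induction ?_ ?_ ?_ ?_ hx
    · rintro ⟨_, _⟩ ⟨a, ha, rfl⟩
      exact ⟨0, a, by simpa using ha, by simp [hφ, mul_assoc, hwz]⟩
    · exact ⟨0, 0, Ideal.zero_mem _, by simp⟩
    · rintro x y _ _ ⟨n, r, hr, h1⟩ ⟨m, t, ht, h2⟩
      refine ⟨n + m + 1, r * z ^ (m + 1) + t * z ^ (n + 1), ?_, ?_⟩
      · refine Ideal.add_mem _ ?_ ?_
        · rw [add_assoc, pow_add, ← mul_assoc]
          exact Ideal.mul_mem_mul hr (Ideal.pow_mem_pow hzJ _)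
        · rw [show n + m + 1 = m + (n + 1) by omega, pow_add, ← mul_assoc]
          exact Ideal.mul_mem_mul ht (Ideal.pow_mem_pow hzJ _)
      · simp only [map_add, map_mul, map_pow, ← h1, ← h2, AddMemClass.coe_add]; ring
    · rintro b x _ ⟨m, t, ht, h2⟩
      obtain ⟨n, r, hr, h1⟩ := hB b b.2
      refine ⟨m + n, t * r, ?_, ?_⟩
      · rw [pow_add, ← mul_assoc]; exact Ideal.mul_mem_mul ht hr
      · simp only [map_mul, ← h1, ← h2, smul_eq_mul, MulMemClass.coe_mul]; ring
  obtain ⟨n, r, hr, h1⟩ := hKJ k hk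
  rw [hk1, one_mul, ← map_pow] at h1
  obtain ⟨⟨_, m, rfl⟩, hm⟩ :=
    (IsLocalization.eq_iff_exists (Submonoid.powers z) L).1 h1
  refine tc_integral_of_mem I z (n + m) ?_
  have h2 : z ^ (n + m + 1) = r * z ^ m := by
    have : z ^ m * z ^ (n + 1) = z ^ m * r := hm
    rw [mul_comm r, ← this]; ring
  rw [h2, pow_add, ← mul_assoc]
  exact Ideal.mul_mem_mul hr (Ideal.pow_mem_pow hzJ m)

/-- The tight closure of an ideal is contained in its integral closure. -/
theorem tightClosure_subset_integralClosure (R : Type*) [CommRing R] [IsNoetherianRing R]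
    [IsReduced R] (p : ℕ) [Fact p.Prime] [CharP R p]
    (I : Ideal R) (z : R) (hz : z ∈ tightClosure p I) :
    IsIntegralOverIdeal I z := by
  obtain ⟨c, hc, N, h⟩ := hz
  refine tc_core I z c ?_ ?_
  · intro y hy
    have h0 : y ∈ sInf (minimalPrimes R) := by
      rw [Ideal.mem_sInf]
      intro P hP
      have hprime : P.IsPrime := hP.1.1
      have : c * y ∈ P := by rw [hy]; exact P.zero_mem
      exact (hprime.mem_or_mem this).resolve_left (hc P hP)
    rw [minimalPrimes, Ideal.sInf_minimalPrimes] at h0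
    obtain ⟨n, hn⟩ := h0
    exact eq_zero_of_pow_eq_zero (Ideal.mem_bot.1 hn)
  · intro N'
    refine ⟨p ^ (max N N'), ?_, ?_⟩
    · exact (le_max_right N N').trans (Nat.lt_pow_self (Fact.out : p.Prime).one_lt).le
    · have hle : I.bracketPow (p ^ (max N N')) ≤ I ^ (p ^ (max N N')) := by
        rw [Ideal.bracketPow, Ideal.span_le]
        rintro _ ⟨a, ha, rfl⟩
        exact Ideal.pow_mem_pow ha _
      exact hle (h _ (le_max_left _ _))
end

section
/- Let R be a reduced Noetherian commutative ring of prime characteristic p and let I ⊆ R be a principal ideal. Then the tight closure of I equals the integral closure of I: x ∈ I^* if and only if x is integral over I. -/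
open IsLocalRing Filter Topology
open scoped TensorProduct

/-- In a reduced ring an element lying in all minimal primes vanishes. -/
lemma eq_zero_of_mem_minimalPrimes {R : Type*} [CommRing R] [IsReduced R] (x : R)
    (h : ∀ P ∈ minimalPrimes R, x ∈ P) : x = 0 := by
  have h1 : x ∈ sInf (minimalPrimes R) := by
    rw [Ideal.mem_sInf]
    intro P hP
    exact h P hP
  have h2 : sInf (minimalPrimes R) = (⊥ : Ideal R).radical := Ideal.sInf_minimalPrimes
  rw [h2] at h1
  obtain ⟨n, hn⟩ := h1
  exact (IsNilpotent.eq_zero ⟨n, by simpa using hn⟩)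

lemma mul_cancel_ringCirc {R : Type*} [CommRing R] [IsReduced R] {c x : R}
    (hc : c ∈ ringCirc R) (h : c * x = 0) : x = 0 := by
  apply eq_zero_of_mem_minimalPrimes
  intro P hP
  have hp : P.IsPrime := Ideal.minimalPrimes_isPrime hP
  have : c * x ∈ P := by rw [h]; exact P.zero_mem
  exact (hp.mem_or_mem this).resolve_left (hc P hP)

lemma mem_bracketPow_span_singleton {R : Type*} [CommRing R] (a x : R) (q : ℕ) :
    x ∈ (Ideal.span {a}).bracketPow q ↔ a ^ q ∣ x := by
  rw [← Ideal.mem_span_singleton]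
  suffices h : (Ideal.span {a}).bracketPow q = Ideal.span {a ^ q} by rw [h]
  apply le_antisymm
  · unfold Ideal.bracketPow
    rw [Ideal.span_le]
    rintro _ ⟨y, hy, rfl⟩
    have hy' : a ∣ y := Ideal.mem_span_singleton.1 hy
    exact Ideal.mem_span_singleton.2 (pow_dvd_pow_of_dvd hy' q)
  · rw [Ideal.span_singleton_le_iff_mem]
    exact Ideal.subset_span ⟨a, Ideal.mem_span_singleton_self a, rfl⟩

/-- An element annihilating `a` generically, avoiding the minimal primes containing `a`. -/
lemma exists_complement {R : Type*} [CommRing R] [IsNoetherianRing R] (a : R) :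
    ∃ c : R, ∀ P ∈ minimalPrimes R, (a ∈ P → c ∉ P) ∧ (a ∉ P → c ∈ P) := by
  classical
  have hfin : (minimalPrimes R).Finite := minimalPrimes.finite_of_isNoetherianRing R
  let S := hfin.toFinset.filter (fun P => a ∈ P)
  let T := hfin.toFinset.filter (fun P => a ∉ P)
  let K : Ideal R := T.inf id
  have hS : ∀ P ∈ S, P ∈ minimalPrimes R ∧ a ∈ P := by simp [S]
  have hT : ∀ P ∈ T, P ∈ minimalPrimes R ∧ a ∉ P := by simp [T]
  have key : ¬ ((K : Set R) ⊆ ⋃ P ∈ (S : Set (Ideal R)), (P : Set R)) := by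
    intro hsub
    have := (Ideal.subset_union_prime (s := S) (f := id) ⊥ ⊥
      (fun P hP _ _ => Ideal.minimalPrimes_isPrime (hS P hP).1)).1 hsub
    obtain ⟨P, hP, hKP⟩ := this
    have hPp : P.IsPrime := Ideal.minimalPrimes_isPrime (hS P hP).1
    obtain ⟨Q, hQ, hQP⟩ := (Ideal.IsPrime.inf_le' hPp).1 hKP
    have hQp : Q.IsPrime := Ideal.minimalPrimes_isPrime (hT Q hQ).1
    have : P ≤ Q := (hS P hP).1.2 ⟨hQp, bot_le⟩ hQP
    exact (hT Q hQ).2 (this (hS P hP).2)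
  obtain ⟨c, hcK, hc⟩ := Set.not_subset.1 key
  refine ⟨c, fun P hP => ⟨fun ha hcP => hc ?_, fun ha => ?_⟩⟩
  · simp only [Set.mem_iUnion]
    exact ⟨P, Finset.mem_coe.2 (Finset.mem_filter.2 ⟨hfin.mem_toFinset.2 hP, ha⟩), hcP⟩
  · have hle : K ≤ P := Finset.inf_le (f := id) (Finset.mem_filter.2 ⟨hfin.mem_toFinset.2 hP, ha⟩)
    exact hle hcK

lemma pow_dvd_of_integral {R : Type*} [CommRing R] (a z : R) (n : ℕ) (b : ℕ → R)
    (hb : ∀ i ∈ Finset.Icc 1 n, b i ∈ Ideal.span {a} ^ i)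
    (h : z ^ n + ∑ i ∈ Finset.Icc 1 n, b i * z ^ (n - i) = 0) (k : ℕ) :
    a ^ k ∣ a ^ n * z ^ k := by
  induction k using Nat.strong_induction_on with
  | _ k ih =>
    rcases le_or_gt k n with hk | hk
    · exact (pow_dvd_pow a hk).mul_right _
    · have e1 : a ^ n * z ^ k =
          -∑ i ∈ Finset.Icc 1 n, b i * (a ^ n * z ^ (k - i)) := by
        have : z ^ k = z ^ (k - n) * z ^ n := by rw [← pow_add]; congr 1; omega
        rw [this, eq_neg_of_add_eq_zero_left h, mul_neg, mul_neg, Finset.mul_sum, Finset.mul_sum]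
        congr 1
        refine Finset.sum_congr rfl fun i hi => ?_
        rw [Finset.mem_Icc] at hi
        have : z ^ (k - i) = z ^ (k - n) * z ^ (n - i) := by rw [← pow_add]; congr 1; omega
        rw [this]; ring
      rw [e1, dvd_neg]
      refine Finset.dvd_sum fun i hi => ?_
      have h1 : a ^ i ∣ b i := by
        have := hb i hi
        rwa [Ideal.span_singleton_pow, Ideal.mem_span_singleton] at this
      rw [Finset.mem_Icc] at hi
      have h2 := mul_dvd_mul h1 (ih (k - i) (by omega))
      rwa [← pow_add, show i + (k - i) = k by omega] at h2

lemma exists_linear_combination {R : Type*} [CommRing R] [IsNoetherianRing R] (r : ℕ → R) :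
    ∃ e : ℕ, ∃ s : ℕ → R, r e = ∑ i ∈ Finset.range e, s i * r i := by
  let f : ℕ →o Ideal R := ⟨fun n => Ideal.span (r '' (Finset.range n : Set ℕ)), by
    intro m n hmn
    apply Ideal.span_mono
    apply Set.image_mono
    exact_mod_cast Finset.range_mono hmn⟩
  obtain ⟨n, hn⟩ := monotone_stabilizes_iff_noetherian.2 ‹IsNoetherianRing R› f
  have h1 : r n ∈ f (n + 1) := Ideal.subset_span ⟨n, by simp, rfl⟩
  rw [← hn (n + 1) (by omega)] at h1
  obtain ⟨s, hs⟩ := (Submodule.mem_span_image_finset_iff_exists_fun R).1 h1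
  refine ⟨n, fun i => if hi : i ∈ Finset.range n then s ⟨i, hi⟩ else 0, ?_⟩
  rw [← hs, ← Finset.sum_coe_sort (Finset.range n)]
  refine Finset.sum_congr rfl fun i _ => ?_
  simp only [smul_eq_mul]
  rw [dif_pos i.2]

/-- For a principal ideal `I` in a reduced Noetherian ring of characteristic `p`,
the tight closure of `I` equals the integral closure of `I`. -/
theorem tightClosure_principal_eq_integralClosure (R : Type*) [CommRing R]
    [IsNoetherianRing R] [IsReduced R] (p : ℕ) [Fact p.Prime] [CharP R p]
    (a : R) (z : R) :
    z ∈ tightClosure p (Ideal.span {a}) ↔ IsIntegralOverIdeal (Ideal.span {a}) z := by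
  have hp1 : 1 < p := (Fact.out : p.Prime).one_lt
  constructor
  · rintro ⟨c, hc, N, h⟩
    have h' : ∀ e, ∃ r, c * z ^ p ^ (N + e) = a ^ p ^ (N + e) * r := fun e =>
      (mem_bracketPow_span_singleton a _ _).1 (h (N + e) (by omega))
    choose r hr using h'
    obtain ⟨e, s, hs⟩ := exists_linear_combination r
    have hlt : ∀ i ∈ Finset.range e, p ^ (N + i) < p ^ (N + e) := fun i hi =>
      Nat.pow_lt_pow_right hp1 (by have := Finset.mem_range.1 hi; omega)
    have main : z ^ p ^ (N + e) - ∑ i ∈ Finset.range e,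
        s i * a ^ (p ^ (N + e) - p ^ (N + i)) * z ^ p ^ (N + i) = 0 := by
      apply mul_cancel_ringCirc hc
      rw [mul_sub, hr, hs, Finset.mul_sum, Finset.mul_sum, sub_eq_zero]
      refine Finset.sum_congr rfl fun i hi => ?_
      have h3 : a ^ p ^ (N + e) = a ^ (p ^ (N + e) - p ^ (N + i)) * a ^ p ^ (N + i) := by
        rw [← pow_add]; congr 1; have := hlt i hi; omega
      rw [h3]
      linear_combination (-(s i * a ^ (p ^ (N + e) - p ^ (N + i)))) * hr i
    refine ⟨p ^ (N + e), by positivity, fun j => -∑ i ∈ Finset.range e,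
      if j = p ^ (N + e) - p ^ (N + i) then s i * a ^ j else 0, ?_, ?_⟩
    · intro j _
      rw [Ideal.span_singleton_pow, Ideal.mem_span_singleton, dvd_neg]
      refine Finset.dvd_sum fun i _ => ?_
      split_ifs
      · exact dvd_mul_left _ _
      · exact dvd_zero _
    · refine Eq.trans ?_ main
      rw [sub_eq_add_neg]
      congr 1
      simp only [neg_mul, Finset.sum_neg_distrib, Finset.sum_mul]
      congr 1
      rw [Finset.sum_comm]
      refine Finset.sum_congr rfl fun i hi => ?_
      have h4 := hlt i hi
      have h5 : 0 < p ^ (N + i) := by positivity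
      rw [Finset.sum_eq_single (p ^ (N + e) - p ^ (N + i))]
      · rw [if_pos rfl, Nat.sub_sub_self h4.le]
      · intro j _ hj
        rw [if_neg hj, zero_mul]
      · intro hj
        exact absurd (Finset.mem_Icc.2 ⟨by omega, by omega⟩) hj
  · rintro ⟨n, hn, b, hb, h⟩
    obtain ⟨c, hc⟩ := exists_complement a
    have hz : ∀ P ∈ minimalPrimes R, a ∈ P → z ∈ P := by
      intro P hP ha
      have hPp : P.IsPrime := Ideal.minimalPrimes_isPrime hP
      apply hPp.mem_of_pow_mem n
      rw [eq_neg_of_add_eq_zero_left h]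
      refine P.neg_mem (P.sum_mem fun i hi => P.mul_mem_right _ ?_)
      have h1 := hb i hi
      rw [Finset.mem_Icc] at hi
      exact (Ideal.span_singleton_le_iff_mem P).2 ha (Ideal.pow_le_self (by omega) h1)
    have hcz : c * z = 0 := by
      apply eq_zero_of_mem_minimalPrimes
      intro P hP
      by_cases ha : a ∈ P
      · exact P.mul_mem_left _ (hz P hP ha)
      · exact P.mul_mem_right _ ((hc P hP).2 ha)
    refine ⟨a ^ n + c, ?_, 0, fun e _ => ?_⟩
    · intro P hP hmem
      have hPp : P.IsPrime := Ideal.minimalPrimes_isPrime hP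
      by_cases ha : a ∈ P
      · exact (hc P hP).1 ha ((P.add_mem_iff_right (P.pow_mem_of_mem ha n hn)).1 hmem)
      · exact ha (hPp.mem_of_pow_mem n ((P.add_mem_iff_left ((hc P hP).2 ha)).1 hmem))
    · rw [mem_bracketPow_span_singleton]
      have h0 : c * z ^ p ^ e = 0 := by
        obtain ⟨m, hm⟩ : ∃ m, p ^ e = m + 1 :=
          Nat.exists_eq_succ_of_ne_zero (by positivity)
        rw [hm, pow_succ', ← mul_assoc, hcz, zero_mul]
      rw [add_mul, h0, add_zero]
      exact pow_dvd_of_integral a z n b hb h _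
end

section
/- Let R be an F-finite reduced Noetherian commutative ring of prime characteristic p. If R is strongly F-regular, then R is weakly F-regular: every ideal I ⊆ R is tightly closed, i.e., I^* = I. -/
open IsLocalRing Filter Topology
open scoped TensorProduct

/-- Iterates of a Frobenius splitting give splittings of large exponent. -/
theorem aux_iterate {R : Type*} [CommRing R] {p e₀ : ℕ} {c₀ : R}
    (h₀ : FrobSplitsWith p c₀ e₀) {c : R} {e : ℕ} (h : FrobSplitsWith p c e) (n : ℕ) :
    FrobSplitsWith p c (n * e₀ + e) := by
  induction n with
  | zero => simpa using h
  | succ n ih =>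
    obtain ⟨φ, hφ, hc⟩ := h₀
    obtain ⟨ψ, hψ, hd⟩ := ih
    refine ⟨φ.comp ((AddMonoidHom.mulLeft c₀).comp ψ), fun r x => ?_, ?_⟩
    · have h1 : r ^ p ^ ((n + 1) * e₀ + e) = (r ^ p ^ e₀) ^ p ^ (n * e₀ + e) := by
        rw [← pow_mul, ← pow_add]; congr 2; ring
      simp only [AddMonoidHom.comp_apply, AddMonoidHom.coe_mulLeft, h1, hψ]
      rw [mul_left_comm, hφ]
    · simp [hd, hc]

theorem aux_mem {R : Type*} [CommRing R] {p e : ℕ} {c : R} (h : FrobSplitsWith p c e)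
    {I : Ideal R} {x : R} (hx : c * x ^ p ^ e ∈ I.bracketPow (p ^ e)) : x ∈ I := by
  obtain ⟨φ, hφ, hc⟩ := h
  have key : ∀ y ∈ I.bracketPow (p ^ e), φ y ∈ I := by
    intro y hy
    refine Submodule.span_induction (p := fun y _ => ∀ r, φ (r * y) ∈ I) ?_ ?_ ?_ ?_ hy 1 |> 
      (by simpa using ·)
    · rintro _ ⟨a, ha, rfl⟩ r
      simp only [mul_comm r, hφ]
      exact I.mul_mem_right _ ha
    · intro r; simp
    · intro a b _ _ ha hb r
      rw [mul_add, map_add]; exact I.add_mem (ha r) (hb r)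
    · intro a b _ hb r
      rw [smul_eq_mul, ← mul_assoc]; exact hb _
  have := key _ hx
  rwa [mul_comm, hφ, hc, mul_one] at this

theorem aux_unit {R : Type*} [CommRing R] [IsNoetherianRing R] [IsReduced R]
    (h : ∀ c ∈ ringCirc R, IsUnit c) {I : Ideal R} {x : R} {n : ℕ} (hx : x ^ n ∈ I) : x ∈ I := by
  have hfin : (minimalPrimes R).Finite := minimalPrimes.finite_of_isNoetherianRing R
  have : Ring.KrullDimLE 0 R := by
    rw [Ring.krullDimLE_zero_iff]
    intro P hP
    obtain ⟨M, hM, hPM⟩ := P.exists_le_maximal hP.ne_top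
    have hsub : (M : Set R) ⊆ ⋃ Q ∈ (hfin.toFinset : Set (Ideal R)), (Q : Set R) := by
      intro m hm
      by_contra hcon
      refine hM.ne_top (M.eq_top_of_isUnit_mem hm (h m fun Q hQ hmQ => hcon ?_))
      simp only [Set.mem_iUnion]
      exact ⟨Q, by simpa using hQ, hmQ⟩
    obtain ⟨Q, hQ, hMQ⟩ := (Ideal.subset_union_prime (f := fun Q : Ideal R => Q) ⊥ ⊥
      (fun Q hQ _ _ => ((hfin.mem_toFinset.1 hQ)).1.1)).1 hsub
    have hQ' : Q ∈ minimalPrimes R := hfin.mem_toFinset.1 hQ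
    have h1 : Q ≤ P := hQ'.2 ⟨hP, bot_le⟩ (hPM.trans hMQ)
    have h2 : P = M := le_antisymm hPM (hMQ.trans h1)
    rwa [h2]
  have hart : IsArtinianRing R := isArtinianRing_iff_krullDimLE_zero.2 this
  have hss : IsSemisimpleRing R := IsArtinianRing.isSemisimpleRing_of_isReduced R
  obtain ⟨J, hJ⟩ := exists_isCompl I
  obtain ⟨a, ha, b, hb, hab⟩ := Submodule.mem_sup.1
    (show (1 : R) ∈ I ⊔ J by rw [hJ.sup_eq_top]; trivial)
  have h0 : (x * b) ^ (n + 1) = 0 := by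
    have h1 : (x * b) ^ (n + 1) ∈ I ⊓ J := by
      refine ⟨?_, ?_⟩
      · rw [show (x * b) ^ (n + 1) = (x * b ^ (n + 1)) * x ^ n by ring]
        exact I.mul_mem_left _ hx
      · exact J.pow_mem_of_mem (J.mul_mem_left _ hb) _ n.succ_pos
    rwa [hJ.inf_eq_bot] at h1
  have h1 : x * b = 0 := eq_zero_of_pow_eq_zero h0
  have : x = x * a := by linear_combination (-x) * hab + h1
  rw [this]
  exact I.mul_mem_left _ ha

/-- A strongly F-regular ring is weakly F-regular: every ideal is tightly closed. -/
theorem strongly_F_regular_is_weakly_F_regular (R : Type*) [CommRing R]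
    [IsNoetherianRing R] [IsReduced R]
    (p : ℕ) [Fact p.Prime] [CharP R p]
    (hFF : FFinite R p)
    (hSFR : ∀ c ∈ ringCirc R, ∃ e : ℕ, FrobSplitsWith p c e) :
    ∀ I : Ideal R, tightClosure p I = (I : Set R) := by
  intro I
  have hp : 1 < p := (Fact.out : p.Prime).one_lt
  apply Set.Subset.antisymm
  · rintro x ⟨c, hc, N, hN⟩
    by_cases h : ∃ c₀ ∈ ringCirc R, ∃ e₀, 0 < e₀ ∧ FrobSplitsWith p c₀ e₀
    · obtain ⟨c₀, -, e₀, he₀, h₀⟩ := h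
      obtain ⟨e, he⟩ := hSFR c hc
      exact aux_mem (aux_iterate h₀ he N) (hN _ (by nlinarith))
    · have hu : ∀ c ∈ ringCirc R, IsUnit c := by
        intro d hd
        obtain ⟨e, φ, hφ, hd1⟩ := hSFR d hd
        have he : e = 0 := by
          by_contra hne
          exact h ⟨d, hd, e, Nat.pos_of_ne_zero hne, φ, hφ, hd1⟩
        subst he
        have h2 := hφ d 1
        rw [pow_zero, pow_one, mul_one, hd1] at h2
        exact IsUnit.of_mul_eq_one _ h2.symm
      have hle : I.bracketPow (p ^ N) ≤ I := by
        refine Ideal.span_le.2 ?_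
        rintro _ ⟨a, ha, rfl⟩
        exact I.pow_mem_of_mem ha _ (by positivity)
      have h3 := hle (hN N le_rfl)
      exact aux_unit hu ((Ideal.unit_mul_mem_iff_mem I (hu c hc)).1 h3)
  · intro x hx
    refine ⟨1, fun P hP h1 => hP.1.1.ne_top ((Ideal.eq_top_iff_one P).2 h1), 0, fun e _ => ?_⟩
    rw [one_mul]
    exact Ideal.subset_span ⟨x, hx, rfl⟩
end

section
/- Let R be an F-finite reduced Noetherian commutative ring of prime characteristic p and let c ∈ R° be an element such that the localization R_c is strongly F-regular. If there exists e ∈ ℕ such that the map cF^e : R → F^e_*R, x ↦ c·x^{p^e}, splits as an R-module homomorphism, then R is strongly F-regular. -/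
open IsLocalRing Filter Topology
open scoped TensorProduct

universe u

/-- Iterated F-finiteness: finitely many generators of `F^e_* R`. -/
theorem FFinite.iterate_gens {R : Type u} [CommRing R] (p : ℕ) [Fact p.Prime] [CharP R p]
    (h : FFinite R p) (e : ℕ) :
    ∃ (ι : Type u) (_ : Fintype ι) (b : ι → R), ∀ x : R, ∃ a : ι → R,
      x = ∑ i, a i ^ p ^ e * b i := by
  induction e with
  | zero =>
    refine ⟨PUnit, inferInstance, fun _ => 1, fun x => ⟨fun _ => x, ?_⟩⟩
    simp
  | succ e ih =>
    obtain ⟨ι, _, b, hb⟩ := ih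
    obtain ⟨s, hs⟩ := h
    refine ⟨ι × s, inferInstance, fun i => (i.2 : R) ^ p ^ e * b i.1, fun x => ?_⟩
    obtain ⟨a, ha⟩ := hb x
    choose α hα using fun i => hs (a i)
    refine ⟨fun i => α i.1 i.2, ?_⟩
    rw [ha, Fintype.sum_prod_type]
    refine Finset.sum_congr rfl fun i _ => ?_
    conv_lhs => rw [hα i, sum_pow_char_pow, Finset.sum_mul, ← Finset.sum_coe_sort]
    refine Finset.sum_congr rfl fun j _ => ?_
    rw [mul_pow, ← pow_mul, pow_succ', mul_assoc]

theorem FrobSplitsWith.pow {R : Type*} [CommRing R] (p : ℕ) [Fact p.Prime] (c : R) (e : ℕ)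
    (h : FrobSplitsWith p c e) (N : ℕ) : ∃ f, FrobSplitsWith p (c ^ N) f := by
  obtain ⟨θ, hθ, hθc⟩ := h
  induction N with
  | zero =>
    refine ⟨e, θ.comp (AddMonoidHom.mulLeft c), fun r x => ?_, ?_⟩
    · simp only [AddMonoidHom.comp_apply, AddMonoidHom.coe_mulLeft]
      rw [mul_left_comm, hθ]
    · simpa using hθc
  | succ N ih =>
    obtain ⟨f, ψ, hψ, hψc⟩ := ih
    have hq : N + 1 ≤ N * p ^ e + 1 :=
      Nat.succ_le_succ (Nat.le_mul_of_pos_right _ (pow_pos (Fact.out : p.Prime).pos e))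
    obtain ⟨k, hk⟩ := Nat.exists_eq_add_of_le hq
    refine ⟨f + e, ψ.comp (θ.comp (AddMonoidHom.mulLeft (c ^ k))), fun r x => ?_, ?_⟩
    · simp only [AddMonoidHom.comp_apply, AddMonoidHom.coe_mulLeft]
      rw [mul_left_comm, pow_add, pow_mul, hθ, hψ]
    · simp only [AddMonoidHom.comp_apply, AddMonoidHom.coe_mulLeft]
      rw [← pow_add, add_comm k, ← hk, pow_succ, pow_mul, hθ, hθc, mul_one, hψc]

theorem mem_nonZeroDivisors_of_ringCirc {R : Type*} [CommRing R] [IsReduced R] {c : R}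
    (hc : c ∈ ringCirc R) : c ∈ nonZeroDivisors R := by
  rw [mem_nonZeroDivisors_iff_right]
  intro x hx
  have : x ∈ sInf (⊥ : Ideal R).minimalPrimes := by
    rw [Ideal.mem_sInf]
    intro P hP
    have := hP.isPrime
    exact (this.mem_or_mem (hx ▸ P.zero_mem : x * c ∈ P)).resolve_right (hc P hP)
  rw [Ideal.sInf_minimalPrimes] at this
  obtain ⟨n, hn⟩ := this
  exact eq_zero_of_pow_eq_zero (n := n) (by simpa using hn)

theorem exists_lift {R : Type u} [CommRing R] (p : ℕ) [Fact p.Prime] [CharP R p]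
    (hFF : FFinite R p) (c : R) (hc : c ∈ nonZeroDivisors R) (d : R) (e : ℕ)
    (h : FrobSplitsWith p (algebraMap R (Localization.Away c) d) e) :
    ∃ N : ℕ, ∃ ψ : R →+ R, (∀ r x : R, ψ (r ^ p ^ e * x) = r * ψ x) ∧ ψ d = c ^ N := by
  obtain ⟨φ, hφ, hφd⟩ := h
  obtain ⟨ι, _, b, hb⟩ := hFF.iterate_gens p e
  obtain ⟨⟨_, N, rfl⟩, hm⟩ := IsLocalization.exist_integer_multiples_of_finite
    (Submonoid.powers c) (fun i => φ (algebraMap R (Localization.Away c) (b i)))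
  have hinj : Function.Injective (algebraMap R (Localization.Away c)) :=
    IsLocalization.injective _ (Submonoid.powers_le.mpr hc)
  choose m hm using hm
  have key : ∀ x : R, ∃ y : R, algebraMap R (Localization.Away c) y =
      algebraMap R (Localization.Away c) (c ^ N) * φ (algebraMap R (Localization.Away c) x) := by
    intro x
    obtain ⟨a, ha⟩ := hb x
    refine ⟨∑ i, a i * m i, ?_⟩
    rw [ha]
    simp only [map_sum, map_mul, map_pow, hφ, hm, Finset.mul_sum, Algebra.smul_def]
    exact Finset.sum_congr rfl fun i _ => by ring
  choose ψ hψ using key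
  refine ⟨N, AddMonoidHom.mk' ψ fun x y => hinj ?_, fun r x => hinj ?_, hinj ?_⟩
  · rw [map_add, hψ, hψ, hψ, map_add, map_add, mul_add]
  · simp only [AddMonoidHom.mk'_apply]
    rw [map_mul, hψ, hψ, map_mul, map_pow _ r, hφ, mul_left_comm]
  · simp only [AddMonoidHom.mk'_apply]
    rw [hψ, hφd, mul_one]

theorem map_mem_ringCirc {R : Type*} [CommRing R] (c d : R) (hd : d ∈ ringCirc R) :
    algebraMap R (Localization.Away c) d ∈ ringCirc (Localization.Away c) := by
  intro P hP hdP
  have h := IsLocalization.minimalPrimes_map (Submonoid.powers c) (Localization.Away c)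
    (⊥ : Ideal R)
  rw [Ideal.map_bot] at h
  have h2 : P ∈ Ideal.under R ⁻¹' (⊥ : Ideal R).minimalPrimes := h ▸ hP
  exact hd _ h2 hdP

/-- If `c ∈ R°` is such that the localization `R_c` is strongly F-regular and some
`cF^e : R → F^e_*R` splits, then `R` is strongly F-regular. -/
theorem strongly_F_regular_of_split (R : Type*) [CommRing R]
    [IsNoetherianRing R] [IsReduced R]
    (p : ℕ) [Fact p.Prime] [CharP R p]
    (hFF : FFinite R p)
    (c : R) (hc : c ∈ ringCirc R)
    (hloc : StronglyFRegular (Localization.Away c) p)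
    (e : ℕ) (hsplit : FrobSplitsWith p c e) :
    StronglyFRegular R p := by
  refine ⟨hFF, inferInstance, fun d hd => ?_⟩
  obtain ⟨e₁, h₁⟩ := hloc.2.2 _ (map_mem_ringCirc c d hd)
  obtain ⟨N, ψ, hψ, hψd⟩ :=
    exists_lift p hFF c (mem_nonZeroDivisors_of_ringCirc hc) d e₁ h₁
  obtain ⟨f, θ, hθ, hθc⟩ := hsplit.pow p c e N
  refine ⟨f + e₁, θ.comp ψ, fun r x => ?_, ?_⟩
  · simp only [AddMonoidHom.comp_apply]
    rw [pow_add, pow_mul, hψ, hθ]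
  · simp only [AddMonoidHom.comp_apply]
    rw [hψd, hθc]
end

section
/- (Fedder's criterion) Let (S, 𝔫) be an F-finite regular local ring of prime characteristic p, let I ⊆ S be a radical ideal, and set R = S/I. Then R is F-pure if and only if the colon ideal (I^{[p]} : I) is not contained in 𝔫^{[p]}. -/
open IsLocalRing Filter Topology
open scoped TensorProduct

universe u v

section FedderHelpers
open RingTheory.Sequence

/-- exchange: an element of `n \ n²` can replace a generator. -/
lemma fed_exchange {R : Type*} [CommRing R] [IsLocalRing R] {n : ℕ} (g : Fin (n+1) → R)
    (hg : maximalIdeal R = Ideal.span (Set.range g)) (x : R) (hx : x ∈ maximalIdeal R)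
    (hx2 : x ∉ (maximalIdeal R) ^ 2) :
    ∃ g' : Fin n → R, maximalIdeal R = Ideal.span {x} ⊔ Ideal.span (Set.range g') := by
  have hgm : ∀ i, g i ∈ maximalIdeal R := fun i => hg ▸ Ideal.subset_span ⟨i, rfl⟩
  obtain ⟨a, ha⟩ := Ideal.mem_span_range_iff_exists_fun.mp (hg ▸ hx)
  have : ∃ i, IsUnit (a i) := by
    by_contra! h
    apply hx2
    rw [← ha, pow_two]
    exact Ideal.sum_mem _ fun i _ => Ideal.mul_mem_mul ((mem_maximalIdeal _).2 (h i)) (hgm i)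
  obtain ⟨i, u, hu⟩ := this
  refine ⟨g ∘ i.succAbove, le_antisymm ?_ ?_⟩
  · rw [hg, Ideal.span_le]
    have h1 : ∀ j, g (i.succAbove j) ∈
        Ideal.span {x} ⊔ Ideal.span (Set.range (g ∘ i.succAbove)) := fun j =>
      Ideal.mem_sup_right (Ideal.subset_span ⟨j, rfl⟩)
    rintro _ ⟨j, rfl⟩
    rcases Fin.eq_self_or_eq_succAbove i j with rfl | ⟨k, rfl⟩
    · rw [Fin.sum_univ_succAbove _ j, ← hu] at ha
      have : g j = ↑u⁻¹ * (x - ∑ k, a (j.succAbove k) * g (j.succAbove k)) := by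
        rw [← ha]; simp
      rw [SetLike.mem_coe, this]
      refine Ideal.mul_mem_left _ _ (Ideal.sub_mem _ ?_ ?_)
      · exact Ideal.mem_sup_left (Ideal.mem_span_singleton_self x)
      · exact Ideal.sum_mem _ fun k _ => Ideal.mul_mem_left _ _ (h1 k)
    · exact h1 k
  · refine sup_le ((Ideal.span_singleton_le_iff_mem _).2 hx) (Ideal.span_le.2 ?_)
    rintro _ ⟨j, rfl⟩
    exact hgm _

lemma fed_quot_max {R : Type*} [CommRing R] [IsLocalRing R] (x : R) (hx : x ∈ maximalIdeal R) :
    ∃ _ : IsLocalRing (R ⧸ Ideal.span {x}),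
      maximalIdeal (R ⧸ Ideal.span {x}) = (maximalIdeal R).map (Ideal.Quotient.mk _) := by
  have hne : Ideal.span {x} ≠ ⊤ := fun h =>
    Ideal.IsPrime.ne_top' (top_le_iff.1 (h ▸ (Ideal.span_singleton_le_iff_mem _).2 hx))
  have : Nontrivial (R ⧸ Ideal.span {x}) := Ideal.Quotient.nontrivial_iff.2 hne
  have : IsLocalRing (R ⧸ Ideal.span {x}) :=
    IsLocalRing.of_surjective' _ Ideal.Quotient.mk_surjective
  exact ⟨this, (IsLocalRing.map_maximalIdeal_of_surjective _ Ideal.Quotient.mk_surjective).symm⟩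

lemma fed_dim_quot {R : Type*} [CommRing R] [IsLocalRing R] [IsNoetherianRing R] (x : R)
    (hx : x ∈ maximalIdeal R) (n : ℕ) (h : ((n + 1 : ℕ) : WithBot ℕ∞) ≤ ringKrullDim R) :
    (n : WithBot ℕ∞) ≤ ringKrullDim (R ⧸ Ideal.span {x}) := by
  have h1 : ringKrullDim R ≤ ringKrullDim (R ⧸ Ideal.span {x}) + 1 := by
    rw [← IsLocalRing.maximalIdeal_height_eq_ringKrullDim]
    exact Ideal.height_le_ringKrullDim_quotient_add_one hx
  have h2 := h.trans h1
  push_cast at h2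
  exact (WithBot.add_le_add_iff_right' (c := 1) (by decide) (by decide)).1 h2

lemma fed_domain (n : ℕ) : ∀ (R : Type u) [CommRing R] [IsLocalRing R] [IsNoetherianRing R]
    (g : Fin n → R) (_ : maximalIdeal R = Ideal.span (Set.range g))
    (_ : (n : WithBot ℕ∞) ≤ ringKrullDim R), IsDomain R := by
  induction n with
  | zero =>
    intro R _ _ _ g hg _
    have : maximalIdeal R = ⊥ := by rw [hg]; simp
    exact (IsLocalRing.isField_iff_maximalIdeal_eq.2 this).isDomain
  | succ n ih =>
    intro R _ _ _ g hg hd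
    have hmin : ∀ P ∈ minimalPrimes R, ¬ maximalIdeal R ≤ P := by
      intro P hP hle
      have := hP.1.1
      have h0 : P.height = 0 := Ideal.height_eq_zero_iff.2 hP
      have : P = maximalIdeal R := le_antisymm (IsLocalRing.le_maximalIdeal hP.1.1.ne_top) hle
      rw [← IsLocalRing.maximalIdeal_height_eq_ringKrullDim, ← this, h0] at hd
      norm_cast at hd
    have hsq : ¬ maximalIdeal R ≤ maximalIdeal R ^ 2 := by
      intro hle
      have hb : maximalIdeal R = ⊥ :=
        Submodule.eq_bot_of_le_smul_of_le_jacobson_bot (maximalIdeal R) _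
          (IsNoetherian.noetherian _) (by rwa [smul_eq_mul, ← pow_two])
          (IsLocalRing.maximalIdeal_le_jacobson _)
      obtain ⟨P, hP, _⟩ := Ideal.exists_minimalPrimes_le (I := (⊥ : Ideal R)) (J := maximalIdeal R) bot_le
      exact hmin P hP (hb ▸ bot_le)
    have hex : ∃ x ∈ maximalIdeal R, x ∉ maximalIdeal R ^ 2 ∧ ∀ P ∈ minimalPrimes R, x ∉ P := by
      by_contra! hcon
      classical
      have hfin := minimalPrimes.finite_of_isNoetherianRing R
      have := (Ideal.subset_union_prime (s := insert (maximalIdeal R ^ 2) hfin.toFinset) (f := id)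
        (maximalIdeal R ^ 2) (maximalIdeal R ^ 2) (I := maximalIdeal R) (by
          intro i hi h1 _
          simp [h1] at hi
          exact hi.1.1)).1 (by
          intro x hx
          simp only [Set.mem_iUnion]
          by_cases h2 : x ∈ maximalIdeal R ^ 2
          · exact ⟨_, by simp, h2⟩
          · obtain ⟨P, hP, hxP⟩ := hcon x hx h2
            exact ⟨P, by simp [hP], hxP⟩)
      obtain ⟨i, hi, hle⟩ := this
      simp only [Finset.mem_insert, Set.Finite.mem_toFinset] at hi
      rcases hi with rfl | hi
      · exact hsq hle
      · exact hmin _ hi hle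
    obtain ⟨x, hx, hx2, hxP⟩ := hex
    obtain ⟨g', hg'⟩ := fed_exchange g hg x hx hx2
    obtain ⟨hloc, hmax⟩ := fed_quot_max x hx
    have hdom : IsDomain (R ⧸ Ideal.span {x}) := by
      refine ih (R ⧸ Ideal.span {x}) (Ideal.Quotient.mk _ ∘ g') ?_ (fed_dim_quot x hx n hd)
      rw [hmax, hg', Ideal.map_sup, Ideal.map_quotient_self, bot_sup_eq, Ideal.map_span,
        Set.range_comp]
    have hprime := (Ideal.Quotient.isDomain_iff_prime _).1 hdom
    obtain ⟨P, hP, hPx⟩ := Ideal.exists_minimalPrimes_le (I := (⊥ : Ideal R)) (J := Ideal.span {x}) bot_le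
    have hPp : P.IsPrime := hP.1.1
    have hPb : P = ⊥ := by
      refine Submodule.eq_bot_of_le_smul_of_le_jacobson_bot (maximalIdeal R) _
          (IsNoetherian.noetherian _) ?_ (IsLocalRing.maximalIdeal_le_jacobson _)
      intro y hy
      obtain ⟨z, rfl⟩ := Ideal.mem_span_singleton'.1 (hPx hy)
      rw [smul_eq_mul, mul_comm z]
      exact Ideal.mul_mem_mul hx ((hPp.mem_or_mem hy).resolve_right (hxP P hP))
    rw [hPb] at hPp
    exact IsDomain.of_bot_isPrime R

lemma fed_range_get {R : Type*} [CommRing R] (l : List R) :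
    Ideal.ofList l = Ideal.span (Set.range l.get) := by
  rw [Ideal.ofList, Set.range_list_get]

lemma fed_weaklyRegular (n : ℕ) : ∀ (R : Type u) [CommRing R] [IsLocalRing R] [IsNoetherianRing R]
    (l : List R) (_ : l.length = n) (_ : maximalIdeal R = Ideal.ofList l)
    (_ : (n : WithBot ℕ∞) ≤ ringKrullDim R), IsWeaklyRegular R l := by
  induction n with
  | zero =>
    intro R _ _ _ l hl _ _
    rw [List.length_eq_zero_iff.1 hl]
    exact .nil R R
  | succ n ih =>
    intro R _ _ _ l hl hm hd
    obtain ⟨x, l, rfl⟩ : ∃ x l', l = x :: l' := List.exists_cons_of_length_eq_add_one hl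
    simp only [List.length_cons, Nat.add_right_cancel_iff] at hl
    have hdom : IsDomain R := by
      refine fed_domain (x :: l).length R (x :: l).get (by rw [hm, fed_range_get]) ?_
      simpa [hl] using hd
    have hx : x ∈ maximalIdeal R := hm ▸ Ideal.subset_span (by simp)
    have hx0 : x ≠ 0 := by
      rintro rfl
      have h1 := ringKrullDim_le_spanFinrank_maximalIdeal R
      have h2 : maximalIdeal R = Ideal.span (Set.range l.get) := by
        rw [hm, Ideal.ofList_cons, ← fed_range_get]; simp
      have h3 : (maximalIdeal R).spanFinrank ≤ n := by
        rw [h2]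
        refine (Submodule.spanFinrank_span_le_ncard_of_finite (Set.finite_range _)).trans ?_
        rw [← Set.image_univ]
        refine (Set.ncard_image_le Set.finite_univ).trans ?_
        simp [Set.ncard_univ, hl]
      have h4 := hd.trans h1
      norm_cast at h4
      omega
    obtain ⟨hloc, hmax⟩ := fed_quot_max x hx
    rw [isWeaklyRegular_cons_iff]
    refine ⟨?_, ?_⟩
    · intro a b hab
      exact mul_left_cancel₀ hx0 hab
    · have := ih (R ⧸ Ideal.span {x}) (l.map (Ideal.Quotient.mk _)) (by simpa using hl) (by
        rw [hmax, hm, Ideal.ofList_cons, Ideal.map_sup, Ideal.map_quotient_self, bot_sup_eq,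
          Ideal.map_ofList]) (fed_dim_quot x hx n hd)
      have h2 := (isWeaklyRegular_map_algebraMap_iff (R ⧸ Ideal.span {x}) (R ⧸ Ideal.span {x}) l).1 this
      refine ((Submodule.quotEquivOfEq _ _ ?_).isWeaklyRegular_congr l).1 h2
      simp [← Submodule.ideal_span_singleton_smul]

lemma fed_free (n : ℕ) : ∀ (R : Type u) [CommRing R] [IsLocalRing R] [IsNoetherianRing R]
    (M : Type v) [AddCommGroup M] [Module R M] [Module.Finite R M]
    (l : List R) (_ : l.length = n) (_ : maximalIdeal R = Ideal.ofList l)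
    (_ : IsWeaklyRegular M l), Module.Free R M := by
  induction n with
  | zero =>
    intro R _ _ _ M _ _ _ l hl hm _
    rw [List.length_eq_zero_iff.1 hl, Ideal.ofList_nil] at hm
    let := (IsLocalRing.isField_iff_maximalIdeal_eq.2 hm).toField
    exact Module.Free.of_divisionRing R M
  | succ n ih =>
    intro R _ _ _ M _ _ _ l hl hm hr
    obtain ⟨x, l, rfl⟩ : ∃ x l', l = x :: l' := List.exists_cons_of_length_eq_add_one hl
    simp only [List.length_cons, Nat.add_right_cancel_iff] at hl
    have hx : x ∈ maximalIdeal R := hm ▸ Ideal.subset_span (by simp)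
    obtain ⟨hloc, hmax⟩ := fed_quot_max x hx
    rw [isWeaklyRegular_cons_iff'] at hr
    have := Module.finitePresentation_of_finite R M
    have := Module.Finite.of_restrictScalars_finite R (R ⧸ Ideal.span {x}) (QuotSMulTop x M)
    refine (Module.free_quotSMulTop_iff_free R M
      (IsLocalRing.maximalIdeal_le_jacobson _ hx) hr.1).1 ?_
    refine ih _ _ (l.map (Ideal.Quotient.mk _)) (by simpa using hl) ?_ hr.2
    rw [hmax, hm, Ideal.ofList_cons, Ideal.map_sup, Ideal.map_quotient_self, bot_sup_eq,
          Ideal.map_ofList]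

section
variable {R : Type*} [CommRing R] [IsLocalRing R] [IsNoetherianRing R]

/-- replacing one entry by a power -/
lemma fed_pow_one (pre l : List R) (x : R) (k : ℕ)
    (hm : ∀ r ∈ pre ++ x :: l, r ∈ maximalIdeal R)
    (h : IsWeaklyRegular R (pre ++ x :: l)) (hk : k ≠ 0) :
    IsWeaklyRegular R (pre ++ x ^ k :: l) := by
  have h1 : ∀ y, List.Perm (pre ++ y :: l) ((pre ++ l) ++ [y]) := fun y =>
    List.perm_middle.trans (List.perm_append_singleton y (pre ++ l)).symm
  have h2 := IsLocalRing.isWeaklyRegular_of_perm_of_subset_maximalIdeal h (h1 x) hm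
  rw [isWeaklyRegular_append_iff, isWeaklyRegular_singleton_iff] at h2
  refine IsLocalRing.isWeaklyRegular_of_perm_of_subset_maximalIdeal
    (rs := (pre ++ l) ++ [x ^ k]) ?_ (h1 _).symm ?_
  · rw [isWeaklyRegular_append_iff, isWeaklyRegular_singleton_iff]
    exact ⟨h2.1, h2.2.pow k⟩
  · intro r hr
    simp only [List.mem_append, List.mem_cons, List.not_mem_nil, or_false] at hr hm
    rcases hr with (hr | hr) | rfl
    · exact hm r (by simp [hr])
    · exact hm r (by simp [hr])
    · exact Ideal.pow_mem_of_mem _ (hm x (by simp)) _ (Nat.pos_of_ne_zero hk)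

lemma fed_pow_all (k : ℕ) (hk : k ≠ 0) (l : List R) : ∀ (pre : List R)
    (_ : ∀ r ∈ pre ++ l, r ∈ maximalIdeal R)
    (_ : IsWeaklyRegular R (pre ++ l)), IsWeaklyRegular R (pre ++ l.map (· ^ k)) := by
  induction l with
  | nil => intro pre _ h; simpa using h
  | cons x l ih =>
    intro pre hm h
    have := ih (pre ++ [x ^ k]) (by
      intro r hr
      simp only [List.mem_append, List.mem_cons, List.not_mem_nil, or_false] at hr hm
      rcases hr with (hr | rfl) | hr
      · exact hm r (by simp [hr])
      · exact Ideal.pow_mem_of_mem _ (hm x (by simp)) _ (Nat.pos_of_ne_zero hk)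
      · exact hm r (by simp [hr])) (by simpa using fed_pow_one pre l x k hm h hk)
    simpa using this

/-- `x` is a nonzerodivisor modulo the other entries -/
lemma fed_colon_one (k : ℕ) (hk : k ≠ 0) (pre l : List R) (x : R)
    (hm : ∀ r ∈ pre ++ x :: l, r ∈ maximalIdeal R)
    (h : IsWeaklyRegular R (pre ++ x :: l)) (a : R)
    (ha : x * a ∈ Ideal.ofList (pre ++ l.map (· ^ k))) :
    a ∈ Ideal.ofList (pre ++ l.map (· ^ k)) := by
  have h1 := fed_pow_all k hk l (pre ++ [x]) (by simpa using hm) (by simpa using h)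
  have h2 := IsLocalRing.isWeaklyRegular_of_perm_of_subset_maximalIdeal h1
    (rs' := (pre ++ l.map (· ^ k)) ++ [x]) (by
      simpa using (List.perm_middle (a := x) (l₁ := pre) (l₂ := l.map (· ^ k))).trans
        (List.perm_append_singleton x (pre ++ l.map (· ^ k))).symm) (by
      intro r hr
      simp only [List.mem_append, List.mem_cons, List.not_mem_nil, or_false, List.mem_map] at hr hm
      rcases hr with (hr | rfl) | ⟨s, hr, rfl⟩
      · exact hm r (by simp [hr])
      · exact hm r (by simp)
      · exact Ideal.pow_mem_of_mem _ (hm s (by simp [hr])) _ (Nat.pos_of_ne_zero hk))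
  rw [isWeaklyRegular_append_iff, isWeaklyRegular_singleton_iff] at h2
  have h3 := h2.2
  rw [smul_eq_mul, Ideal.mul_top] at h3
  exact mem_of_isSMulRegular_quotient_of_smul_mem h3 ha

lemma fed_socle (k : ℕ) (l : List R) : ∀ (pre : List R)
    (_ : ∀ r ∈ pre ++ l, r ∈ maximalIdeal R)
    (_ : IsWeaklyRegular R (pre ++ l)) (y : R)
    (_ : ∀ r ∈ l, r * y ∈ Ideal.ofList (pre ++ l.map (· ^ (k + 1)))),
    ∃ s, y - s * l.prod ^ k ∈ Ideal.ofList (pre ++ l.map (· ^ (k + 1))) := by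
  induction l with
  | nil => intro pre _ _ y _; exact ⟨y, by simp⟩
  | cons x l ih =>
    intro pre hm h y hy
    set K := Ideal.ofList (pre ++ l.map (· ^ (k + 1))) with hK
    have hreg := fed_colon_one (k + 1) (by omega) pre l x hm h
    rw [← hK] at hreg
    have hregp : ∀ j a, x ^ j * a ∈ K → a ∈ K := by
      intro j
      induction j with
      | zero => intro a; simp
      | succ j ihj =>
        intro a ha
        exact ihj a (hreg _ (by rwa [← mul_assoc, ← pow_succ']))
    have hA : Ideal.ofList (pre ++ (x :: l).map (· ^ (k + 1))) = Ideal.span {x ^ (k + 1)} ⊔ K := by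
      simp only [hK, List.map_cons, Ideal.ofList_append, Ideal.ofList_cons]
      rw [sup_left_comm]
    have hB : Ideal.ofList ((pre ++ [x]) ++ l.map (· ^ (k + 1))) = Ideal.span {x} ⊔ K := by
      simp only [hK, Ideal.ofList_append, Ideal.ofList_singleton]
      rw [sup_right_comm, sup_comm]
    rw [hA] at hy ⊢
    have memA : ∀ m z, z ∈ Ideal.span {x ^ m} ⊔ K ↔ ∃ t, z - x ^ m * t ∈ K := by
      intro m z
      rw [Submodule.mem_sup]
      constructor
      · rintro ⟨a, ha, b, hb, rfl⟩
        obtain ⟨t, rfl⟩ := Ideal.mem_span_singleton'.1 ha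
        exact ⟨t, by convert! hb using 1; ring⟩
      · rintro ⟨t, ht⟩
        exact ⟨x ^ m * t, Ideal.mul_mem_right _ _ (Ideal.mem_span_singleton_self _), _, ht, by ring⟩
    obtain ⟨t, ht⟩ := (memA _ _).1 (hy x (by simp))
    have hk1 : y - x ^ k * t ∈ K := hreg _ (by convert! ht using 1; ring)
    obtain ⟨s, hs⟩ := ih (pre ++ [x]) (by simpa using hm) (by simpa using h) t (by
      intro r hr
      rw [hB, ← pow_one x, memA]
      obtain ⟨t', ht'⟩ := (memA _ _).1 (hy r (by simp [hr]))
      refine ⟨t', hregp k _ ?_⟩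
      have := K.sub_mem ht' (K.mul_mem_left r hk1)
      convert! this using 1; ring)
    rw [hB, ← pow_one x, memA] at hs
    obtain ⟨t', ht'⟩ := hs
    refine ⟨s, (memA _ _).2 ⟨t', ?_⟩⟩
    have := K.add_mem hk1 (K.mul_mem_left (x ^ k) ht')
    convert! this using 1
    simp only [List.prod_cons]; ring

/-- duality for `R/(x₁^q,…,x_d^q)` -/
lemma fed_dual (k : ℕ) (l : List R) (hl : maximalIdeal R = Ideal.ofList l)
    (h : IsWeaklyRegular R l) (y : R) (hy : y ∉ Ideal.ofList (l.map (· ^ (k + 1)))) :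
    (∃ z, y * z - l.prod ^ k ∈ Ideal.ofList (l.map (· ^ (k + 1)))) ∧
      l.prod ^ k ∉ Ideal.ofList (l.map (· ^ (k + 1))) := by
  set Q := Ideal.ofList (l.map (· ^ (k + 1))) with hQ
  have hm : ∀ r ∈ l, r ∈ maximalIdeal R := fun r hr => hl ▸ Ideal.subset_span hr
  have hQm : ∀ r ∈ l, r ^ (k + 1) ∈ Q := fun r hr =>
    Ideal.subset_span (by simpa using ⟨r, hr, rfl⟩)
  have hpow : ∃ N, maximalIdeal R ^ N ≤ Q := by
    refine Ideal.exists_pow_le_of_le_radical_of_fg ?_ (IsNoetherian.noetherian _)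
    rw [hl]
    refine Ideal.span_le.2 fun r hr => ⟨k + 1, hQm r hr⟩
  have hex : ∃ N, ∀ z ∈ maximalIdeal R ^ N, z * y ∈ Q := by
    obtain ⟨N, hN⟩ := hpow
    exact ⟨N, fun z hz => Q.mul_mem_right _ (hN hz)⟩
  classical
  have hspec := Nat.find_spec hex
  have hN0 : Nat.find hex ≠ 0 := by
    intro h0
    rw [h0] at hspec
    exact hy (by simpa using hspec 1 (by simp))
  obtain ⟨N, hN⟩ := Nat.exists_eq_succ_of_ne_zero hN0
  have hnot := Nat.find_min hex (m := N) (by omega)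
  push Not at hnot
  obtain ⟨z, hz, hzy⟩ := hnot
  rw [hN] at hspec
  have hsoc : ∀ r ∈ maximalIdeal R, r * (z * y) ∈ Q := by
    intro r hr
    rw [← mul_assoc]
    exact hspec _ (by rw [Nat.succ_eq_add_one, pow_succ']; exact Ideal.mul_mem_mul hr hz)
  obtain ⟨s, hs⟩ := fed_socle k l [] (by simpa using hm) (by simpa using h) (z * y)
    (fun r hr => by simpa using hsoc r (hm r hr))
  simp only [List.nil_append] at hs
  rw [← hQ] at hs
  have hu : ∀ r ∈ maximalIdeal R, r * l.prod ^ k ∈ Q := by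
    intro r hr
    rw [hl] at hr
    refine Submodule.span_induction (p := fun r _ => r * l.prod ^ k ∈ Q) ?_ (by simp) ?_ ?_ hr
    · intro r hr
      obtain ⟨c, hc⟩ := List.dvd_prod hr
      rw [hc, mul_pow, ← mul_assoc, ← pow_succ']
      exact Q.mul_mem_right _ (hQm r hr)
    · intro a b _ _ ha hb
      rw [add_mul]; exact Q.add_mem ha hb
    · intro a b _ hb
      rw [smul_eq_mul, mul_assoc]; exact Q.mul_mem_left _ hb
  have hsu : IsUnit s := by
    by_contra hsu
    have := Q.add_mem hs (hu s ((mem_maximalIdeal _).2 hsu))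
    exact hzy (by simpa using this)
  obtain ⟨v, rfl⟩ := hsu
  refine ⟨⟨z * ↑v⁻¹, ?_⟩, fun hQu => hzy
    (by simpa using Q.add_mem hs (Q.mul_mem_left (↑v) hQu))⟩
  have := Q.mul_mem_left ↑v⁻¹ hs
  convert! this using 1
  rw [mul_sub, ← mul_assoc (↑v⁻¹ : R) (↑v : R), Units.inv_mul]; ring
end

section
variable {S T : Type*} [CommRing S] [CommRing T] [Algebra S T]

lemma fed_mem_map {ι : Type*} [Fintype ι] (b : Module.Basis ι S T) (J : Ideal S) (y : T) :
    y ∈ J.map (algebraMap S T) ↔ ∀ ψ : T →ₗ[S] S, ψ y ∈ J := by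
  constructor
  · intro hy ψ
    refine Submodule.span_induction (p := fun y _ => ∀ ψ : T →ₗ[S] S, ψ y ∈ J) ?_ (by simp)
      ?_ ?_ hy ψ
    · rintro _ ⟨a, ha, rfl⟩ ψ
      rw [Algebra.algebraMap_eq_smul_one, map_smul]
      exact J.mul_mem_right _ ha
    · intro a b _ _ ha hb ψ
      rw [map_add]; exact J.add_mem (ha ψ) (hb ψ)
    · intro a b _ hb ψ
      exact hb (ψ ∘ₗ LinearMap.mulLeft S a)
  · intro h
    rw [← b.sum_repr y]
    refine Ideal.sum_mem _ fun i _ => ?_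
    rw [Algebra.smul_def]
    exact Ideal.mul_mem_right _ _ (Ideal.mem_map_of_mem _ (h (b.coord i)))

lemma fed_generator [IsLocalRing S] {ι : Type*} [Fintype ι] (b : Module.Basis ι S T)
    (u : T) (hu : u ∉ (maximalIdeal S).map (algebraMap S T))
    (hdual : ∀ y ∉ (maximalIdeal S).map (algebraMap S T), ∃ z,
      y * z - u ∈ (maximalIdeal S).map (algebraMap S T)) :
    ∃ Φ : T →ₗ[S] S, ∀ ψ : T →ₗ[S] S, ∃ c, ∀ x, ψ x = Φ (c * x) := by
  classical
  obtain ⟨Φ, hΦ⟩ : ∃ Φ : T →ₗ[S] S, Φ u ∉ maximalIdeal S := by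
    rw [fed_mem_map b] at hu; push Not at hu; exact hu
  refine ⟨Φ, fun ψ => ?_⟩
  let G : Matrix ι ι S := Matrix.of fun i j => Φ (b i * b j)
  have hG : IsUnit G.det := by
    by_contra hG
    have h0 : (G.map (residue S)).det = 0 := by
      rw [← RingHom.mapMatrix_apply, ← RingHom.map_det]
      exact (residue_eq_zero_iff _).2 ((mem_maximalIdeal _).2 hG)
    obtain ⟨v, hv, hGv⟩ := Matrix.exists_mulVec_eq_zero_iff.2 h0
    choose w hw using fun i => residue_surjective (R := S) (v i)
    let y := ∑ j, w j • b j
    have hy : y ∉ (maximalIdeal S).map (algebraMap S T) := by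
      rw [fed_mem_map b]
      intro hall
      apply hv
      funext i
      have := hall (b.coord i)
      rw [← hw i]
      refine (residue_eq_zero_iff _).2 ?_
      simpa [y, Finsupp.single_apply] using this
    obtain ⟨z, hz⟩ := hdual y hy
    have h1 : ∀ i, Φ (b i * y) ∈ maximalIdeal S := by
      intro i
      rw [← residue_eq_zero_iff]
      have := congrFun hGv i
      simp only [Matrix.mulVec, dotProduct, Matrix.map_apply, G, Matrix.of_apply,
        Pi.zero_apply] at this
      rw [← this]
      simp [y, Finset.mul_sum, ← hw, mul_comm]
    have h2 : Φ (y * z) ∈ maximalIdeal S := by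
      rw [mul_comm, ← b.sum_repr z, Finset.sum_mul, map_sum]
      refine Ideal.sum_mem _ fun i _ => ?_
      rw [smul_mul_assoc, map_smul]
      exact Ideal.mul_mem_left _ _ (h1 i)
    have h3 := (fed_mem_map b _ _).1 hz Φ
    rw [map_sub] at h3
    exact hΦ (by simpa using Ideal.sub_mem _ h2 h3)
  let w := G⁻¹.mulVec (fun i => ψ (b i))
  have hw : G.mulVec w = fun i => ψ (b i) := by
    simp only [w, Matrix.mulVec_mulVec, Matrix.mul_nonsing_inv _ hG, Matrix.one_mulVec]
  refine ⟨∑ j, w j • b j, fun x => ?_⟩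
  have : ψ = Φ ∘ₗ LinearMap.mulLeft S (∑ j, w j • b j) := by
    refine b.ext fun i => ?_
    rw [← congrFun hw i]
    simp [Matrix.mulVec, dotProduct, G, Finset.mul_sum, mul_comm]
  rw [this]; rfl
end
/-- `F_* S` -/
def FedFrob (S : Type u) (_ : ℕ) : Type u := S

instance (S : Type u) [CommRing S] (p : ℕ) : CommRing (FedFrob S p) := inferInstanceAs (CommRing S)

noncomputable instance (S : Type u) [CommRing S] (p : ℕ) [Fact p.Prime] [CharP S p] :
    Algebra S (FedFrob S p) := RingHom.toAlgebra (R := S) (S := FedFrob S p) (frobenius S p)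

/-- `p⁻¹`-linear maps -/
def FedPL {S A : Type*} [CommRing S] [AddCommGroup A] [Module S A] (p : ℕ) (ψ : S →+ A) : Prop :=
  ∀ r x : S, ψ (r ^ p * x) = r • ψ x

section
variable {S : Type u} [CommRing S] (p : ℕ) [Fact p.Prime] [CharP S p]

/-- `p⁻¹`-linear maps as linear maps on `F_* S` -/
noncomputable def FedPL.toLin {A : Type*} [AddCommGroup A] [Module S A] {ψ : S →+ A} (h : FedPL p ψ) :
    FedFrob S p →ₗ[S] A where
  toFun := ψ
  map_add' := ψ.map_add
  map_smul' := h

/-- underlying additive map -/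
noncomputable def fedOfLin {A : Type*} [AddCommGroup A] [Module S A] (f : FedFrob S p →ₗ[S] A) : S →+ A :=
  f.toAddMonoidHom

lemma fedOfLin_pl {A : Type*} [AddCommGroup A] [Module S A] (f : FedFrob S p →ₗ[S] A) :
    FedPL p (fedOfLin p f) := fun r x => f.map_smul r x

lemma fed_core [IsLocalRing S] [IsNoetherianRing S] (hreg : IsRegularLocal S) (hFF : FFinite S p)
    (I : Ideal S) :
    (∃ Φ : S →+ S, FedPL p Φ ∧ ∀ ψ : S →+ S, FedPL p ψ → ∃ c, ∀ x, ψ x = Φ (c * x)) ∧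
    (∀ (J : Ideal S) (y : S), y ∈ J.bracketPow p ↔ ∀ ψ : S →+ S, FedPL p ψ → ψ y ∈ J) ∧
    (∀ θ : S →+ S ⧸ I, FedPL p θ → ∃ ψ : S →+ S, FedPL p ψ ∧
      ∀ x, Ideal.Quotient.mk I (ψ x) = θ x) := by
  obtain ⟨_, d, x, hdim, hmax⟩ := hreg
  have hp0 : p ≠ 0 := (Fact.out : p.Prime).ne_zero
  let l := List.ofFn x
  have hl : maximalIdeal S = Ideal.ofList l := by
    rw [hmax, Ideal.ofList]
    congr 1
    ext y
    simp [l, List.mem_ofFn]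
  have hlm : ∀ r ∈ l, r ∈ maximalIdeal S := fun r hr => hl ▸ Ideal.subset_span hr
  have hwr : IsWeaklyRegular S l := fed_weaklyRegular d S l (by simp [l]) hl hdim.ge
  have hwp : IsWeaklyRegular S (l.map (· ^ p)) := by
    simpa using fed_pow_all p hp0 l [] (by simpa using hlm) (by simpa using hwr)
  have hfin : Module.Finite S (FedFrob S p) := by
    obtain ⟨s, hs⟩ := hFF
    refine ⟨⟨(show Finset (FedFrob S p) from s), top_le_iff.1 fun y _ => ?_⟩⟩
    obtain ⟨a, ha⟩ := hs y
    have : y = ∑ b ∈ (show Finset (FedFrob S p) from s), (show S from a b) • b := ha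
    rw [this]
    exact Submodule.sum_mem _ fun b hb => Submodule.smul_mem _ _ (Submodule.subset_span hb)
  have hwT : IsWeaklyRegular (FedFrob S p) l :=
    (isWeaklyRegular_map_algebraMap_iff (FedFrob S p) (FedFrob S p) l).1 hwp
  have hfree : Module.Free S (FedFrob S p) := fed_free d S (FedFrob S p) l (by simp [l]) hl hwT
  let b := Module.Free.chooseBasis S (FedFrob S p)
  have hbr : ∀ J : Ideal S, (J.map (algebraMap S (FedFrob S p)) : Ideal (FedFrob S p)) =
    (show Ideal (FedFrob S p) from J.bracketPow p) := fun J => rfl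
  have hQ : (maximalIdeal S).bracketPow p = Ideal.ofList (l.map (· ^ p)) := by
    change (maximalIdeal S).map (frobenius S p) = _
    rw [hl, Ideal.map_ofList]
    rfl
  have hpk : p - 1 + 1 = p := by omega
  have hdual := fed_dual (p - 1) l hl hwr
  rw [hpk, ← hQ] at hdual
  have hone : (1 : S) ∉ (maximalIdeal S).bracketPow p := by
    intro h1
    have : (maximalIdeal S).bracketPow p ≤ maximalIdeal S := by
      refine Ideal.span_le.2 ?_
      rintro _ ⟨a, ha, rfl⟩
      exact Ideal.pow_mem_of_mem _ ha _ (Nat.pos_of_ne_zero hp0)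
    exact (Ideal.ne_top_iff_one _).1 Ideal.IsPrime.ne_top' (this h1)
  refine ⟨?_, ?_, ?_⟩
  · obtain ⟨Φ, hΦ⟩ := fed_generator b (show FedFrob S p from l.prod ^ (p - 1))
      (hdual 1 hone).2 (fun y hy => (hdual y hy).1)
    refine ⟨fedOfLin p Φ, fedOfLin_pl p Φ, fun ψ hψ => hΦ (hψ.toLin)⟩
  · intro J y
    refine (fed_mem_map b J (show FedFrob S p from y)).trans ?_
    exact ⟨fun h ψ hψ => h hψ.toLin, fun h ψ => h _ (fedOfLin_pl p ψ)⟩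
  · intro θ hθ
    obtain ⟨ψ, hψ⟩ := Module.projective_lifting_property (Submodule.mkQ I) (hθ.toLin)
      (Submodule.mkQ_surjective _)
    exact ⟨fedOfLin p ψ, fedOfLin_pl p ψ, fun x => LinearMap.congr_fun hψ x⟩
end

end FedderHelpers

/-- **Fedder's criterion.** Let `(S, 𝔫)` be an F-finite regular local ring of
characteristic `p`, `I` a radical ideal and `R = S/I`. Then `R` is F-pure if and only if
`(I^{[p]} : I) ⊄ 𝔫^{[p]}`. -/
theorem fedder_criterion (S : Type*) [CommRing S] [IsLocalRing S] [IsNoetherianRing S]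
    (p : ℕ) [Fact p.Prime] [CharP S p]
    (hreg : IsRegularLocal S) (hFF : FFinite S p)
    (I : Ideal S) (hrad : I.IsRadical) :
    FPure (S ⧸ I) p ↔
      ¬ (Submodule.colon (I.bracketPow p) I ≤
          (IsLocalRing.maximalIdeal S).bracketPow p) := by
  
  obtain ⟨⟨Φ, hΦ, hgen⟩, hmem, hlift⟩ := fed_core p hreg hFF I
  have hp0 : p ≠ 0 := (Fact.out : p.Prime).ne_zero
  rw [SetLike.not_le_iff_exists]
  constructor
  · rintro ⟨φ, hφ, hφ1⟩
    by_cases hI : I = ⊤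
    · subst hI
      refine ⟨1, ?_, ?_⟩
      · rw [Submodule.mem_colon]
        intro s _
        have h1 : (1 : S) ∈ (⊤ : Ideal S).bracketPow p :=
          Ideal.subset_span ⟨1, by simp, by simp⟩
        rw [(Ideal.eq_top_iff_one _).2 h1]; trivial
      · intro h1
        have : (maximalIdeal S).bracketPow p ≤ maximalIdeal S := by
          refine Ideal.span_le.2 ?_
          rintro _ ⟨a, ha, rfl⟩
          exact Ideal.pow_mem_of_mem _ ha _ (Nat.pos_of_ne_zero hp0)
        exact (Ideal.ne_top_iff_one _).1 Ideal.IsPrime.ne_top' (this h1)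
    · obtain ⟨ψ, hψ, hψφ⟩ := hlift (φ.comp (Ideal.Quotient.mk I).toAddMonoidHom) (by
        intro r x
        change φ (Ideal.Quotient.mk I (r ^ p * x)) = r • φ (Ideal.Quotient.mk I x)
        rw [map_mul, map_pow, hφ, Algebra.smul_def]; rfl)
      have hψφ' : ∀ x, Ideal.Quotient.mk I (ψ x) = φ (Ideal.Quotient.mk I x) := hψφ
      obtain ⟨c, hc⟩ := hgen ψ hψ
      refine ⟨c, ?_, ?_⟩
      · rw [Submodule.mem_colon]
        intro s hs
        rw [smul_eq_mul, hmem]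
        intro χ hχ
        obtain ⟨e, he⟩ := hgen χ hχ
        rw [he, mul_left_comm, ← hc, ← Ideal.Quotient.eq_zero_iff_mem, hψφ',
          Ideal.Quotient.eq_zero_iff_mem.2 (I.mul_mem_left e hs), map_zero]
      · intro hcn
        have h1 := (hmem _ _).1 hcn Φ hΦ
        rw [← mul_one c, ← hc] at h1
        have h2 : ψ 1 - 1 ∈ I := by
          rw [← Ideal.Quotient.eq_zero_iff_mem, map_sub, hψφ', map_one, hφ1, sub_self]
        have h3 := Ideal.sub_mem _ h1 (IsLocalRing.le_maximalIdeal hI h2)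
        rw [sub_sub_cancel] at h3
        exact (Ideal.ne_top_iff_one _).1 Ideal.IsPrime.ne_top' h3
  · rintro ⟨c, hc, hcn⟩
    rw [Submodule.mem_colon] at hc
    rw [hmem] at hcn
    push Not at hcn
    obtain ⟨χ, hχ, hχc⟩ := hcn
    obtain ⟨v, hv⟩ : IsUnit (χ c) := by
      by_contra h
      exact hχc ((mem_maximalIdeal _).2 h)
    let ψ : S →+ S := ((AddMonoidHom.mulLeft (↑v⁻¹ : S)).comp χ).comp (AddMonoidHom.mulLeft c)
    have hψ : ∀ x, ψ x = ↑v⁻¹ * χ (c * x) := fun x => rfl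
    have hψI : ∀ x ∈ I, ψ x ∈ I := by
      intro x hx
      rw [hψ]
      exact I.mul_mem_left _ ((hmem _ _).1 (hc x hx) χ hχ)
    let φ : S ⧸ I →+ S ⧸ I := QuotientAddGroup.map _ _ ψ (fun x hx => hψI x hx)
    have hφ : ∀ x, φ (Ideal.Quotient.mk I x) = Ideal.Quotient.mk I (ψ x) := fun x => rfl
    refine ⟨φ, ?_, ?_⟩
    · intro r x
      obtain ⟨r, rfl⟩ := Ideal.Quotient.mk_surjective r
      obtain ⟨x, rfl⟩ := Ideal.Quotient.mk_surjective x
      rw [← map_pow, ← map_mul, hφ, hφ, ← map_mul, hψ, hψ, mul_left_comm c, hχ, smul_eq_mul,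
        mul_left_comm]
    · rw [← map_one (Ideal.Quotient.mk I), hφ, hψ, mul_one, ← hv, Units.inv_mul]
end
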